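/- arXiv:2311.15184 — 13 statements merged into one kernel-verified Lean document; each statement's English description precedes it below -/
import Mathlib

section
/- For every integer k ≥ 1, every real λ > 0, and every integer n ≥ 0, the series defining the n-th factorial moment of the Poisson distribution of order k converges and equals the explicit combinatorial sum: M_{(n)}(k,λ) = n! · Σ_{n₁+2n₂+⋯+k·n_k = n} ∏_{j=1}^k (λ^{n_j}/n_j!) · C(k+1, j+1)^{n_j}, where the (finite) sum ranges over all k-tuples (n₁,…,n_k) of nonnegative integers with n₁+2n₂+⋯+k·n_k = n. -/
open scoped BigOperators

/-- The finite set of `k`-tuples `(n₁, …, n_k)` of nonnegative integers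
(encoded as functions `Fin k → Fin (m+1)`) satisfying `n₁ + 2 n₂ + ⋯ + k n_k = m`. -/
def orderkTuples (k m : ℕ) : Finset (Fin k → Fin (m + 1)) :=
  Finset.univ.filter (fun f => ∑ j : Fin k, (j.1 + 1) * (f j).1 = m)

/-- The probability mass function of the Poisson distribution of order `k`:
`P_m(k,λ) = e^{-kλ} ∑_{n₁+2n₂+⋯+k n_k = m} ∏_{j=1}^k λ^{n_j}/n_j!`. -/
noncomputable def poissonOrderK (k : ℕ) (lam : ℝ) (m : ℕ) : ℝ :=
  Real.exp (-(k * lam)) *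
    ∑ f ∈ orderkTuples k m, ∏ j : Fin k, lam ^ (f j).1 / (f j).1.factorial

lemma hasSum_mul_real {ι κ : Type} {f : ι → ℝ} {g : κ → ℝ} {a b : ℝ}
    (hf : HasSum f a) (hg : HasSum g b) :
    HasSum (fun x : ι × κ => f x.1 * g x.2) (a * b) := by
  have h1 : Summable (fun i => ‖f i‖) := hf.summable.norm
  have h2 : Summable (fun i => ‖g i‖) := hg.summable.norm
  have hs : Summable (fun x : ι × κ => f x.1 * g x.2) := summable_mul_of_summable_norm h1 h2
  exact hf.mul hg hs

lemma hasSum_pi_prod : ∀ (k : ℕ) (g : Fin k → ℕ → ℝ) (a : Fin k → ℝ),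
    (∀ j, HasSum (g j) (a j)) →
    HasSum (fun f : Fin k → ℕ => ∏ j, g j (f j)) (∏ j, a j) := by
  intro k
  induction k with
  | zero =>
    intro g a _
    simp
  | succ k ih =>
    intro g a h
    have h0 := h 0
    have h1 := ih (fun j => g j.succ) (fun j => a j.succ) (fun j => h j.succ)
    have h2 := hasSum_mul_real h0 h1
    rw [Fin.prod_univ_succ]
    rw [← (Fin.consEquiv (fun _ : Fin (k+1) => ℕ)).hasSum_iff]
    convert! h2 using 1
    funext x
    simp [Fin.prod_univ_succ, Fin.consEquiv]

/-- Fibre of the weight map versus the finite set of tuples. -/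
def fiberEquiv (k m : ℕ) :
    {x // x ∈ orderkTuples k m} ≃ {f : Fin k → ℕ // ∑ j : Fin k, (j.1 + 1) * f j = m} where
  toFun x := ⟨fun j => (x.1 j).1, by
    have := x.2
    simpa [orderkTuples] using this⟩
  invFun f := ⟨fun j => ⟨f.1 j, by
      have h1 : (j.1 + 1) * f.1 j ≤ ∑ j : Fin k, (j.1 + 1) * f.1 j :=
        Finset.single_le_sum (f := fun j : Fin k => (j.1 + 1) * f.1 j)
          (fun _ _ => Nat.zero_le _) (Finset.mem_univ j)
      rw [f.2] at h1
      nlinarith [Nat.zero_le (j.1 * f.1 j)]⟩, by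
    have := f.2
    simpa [orderkTuples] using this⟩
  left_inv x := by ext; rfl
  right_inv f := by ext; rfl

lemma hasSum_gen (k : ℕ) (c : Fin k → ℝ) (s : ℝ) :
    HasSum (fun m : ℕ =>
      (∑ f ∈ orderkTuples k m, ∏ j : Fin k, c j ^ (f j).1 / (f j).1.factorial) * s ^ m)
      (Real.exp (∑ j : Fin k, c j * s ^ (j.1 + 1))) := by
  have h := hasSum_pi_prod k (fun j n => (c j * s ^ (j.1 + 1)) ^ n / n.factorial)
    (fun j => Real.exp (c j * s ^ (j.1 + 1))) (fun j => by
      rw [Real.exp_eq_exp_ℝ]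
      exact NormedSpace.expSeries_div_hasSum_exp (c j * s ^ (j.1 + 1)))
  rw [← Real.exp_sum] at h
  rw [← (Equiv.sigmaFiberEquiv (fun f : Fin k → ℕ => ∑ j : Fin k, (j.1 + 1) * f j)).hasSum_iff] at h
  refine h.sigma (fun m => ?_)
  rw [← (fiberEquiv k m).hasSum_iff]
  have h3 := Finset.hasSum (orderkTuples k m)
    (fun f => (∏ j : Fin k, c j ^ (f j).1 / ((f j).1.factorial : ℝ)) * s ^ m)
  rw [← Finset.sum_mul] at h3
  convert! h3 using 1
  funext x
  have hx : ∑ j : Fin k, (j.1 + 1) * (x.1 j).1 = m := by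
    have := x.2
    simpa [orderkTuples] using this
  have : s ^ m = ∏ j : Fin k, (s ^ (j.1 + 1)) ^ (x.1 j).1 := by
    conv_lhs => rw [← hx]
    rw [← Finset.prod_pow_eq_pow_sum]
    simp only [pow_mul]
  simp only [Function.comp]
  rw [this, ← Finset.prod_mul_distrib]
  refine Finset.prod_congr rfl fun j _ => ?_
  simp only [fiberEquiv, Equiv.sigmaFiberEquiv, Equiv.coe_fn_mk, mul_pow]
  ring

lemma coeff_unique (a b : ℕ → ℝ) (F : ℝ → ℝ)
    (ha : ∀ t, HasSum (fun n => a n * t ^ n) (F t))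
    (hb : ∀ t, HasSum (fun n => b n * t ^ n) (F t)) : a = b := by
  have key : ∀ a : ℕ → ℝ, (∀ t, HasSum (fun n => a n * t ^ n) (F t)) →
      HasFPowerSeriesAt F (FormalMultilinearSeries.ofScalars ℝ a) 0 := by
    intro a ha
    rw [hasFPowerSeriesAt_iff]
    refine Filter.Eventually.of_forall fun z => ?_
    simpa [FormalMultilinearSeries.coeff_ofScalars, mul_comm] using ha z
  exact FormalMultilinearSeries.ofScalars_series_injective ℝ ℝ
    ((key a ha).eq_formalMultilinearSeries (key b hb))

lemma sum_binom (k : ℕ) (t : ℝ) :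
    ∑ j : Fin k, (1 + t) ^ (j.1 + 1) =
      k + ∑ j : Fin k, ((k + 1).choose (j.1 + 2) : ℝ) * t ^ (j.1 + 1) := by
  rw [Fin.sum_univ_eq_sum_range (fun j => (1 + t) ^ (j + 1)),
    Fin.sum_univ_eq_sum_range (fun j => ((k + 1).choose (j + 2) : ℝ) * t ^ (j + 1))]
  induction k with
  | zero => simp
  | succ k ih =>
    rw [Finset.sum_range_succ, ih]
    have h1 : ∀ j, ((k + 1 + 1).choose (j + 2) : ℝ)
        = (k + 1).choose (j + 1) + (k + 1).choose (j + 2) := fun j => by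
      rw [Nat.choose_succ_succ (k + 1) (j + 1)]; push_cast; ring
    simp only [h1, add_mul, Finset.sum_add_distrib]
    rw [Finset.sum_range_succ (fun j => ((k + 1).choose (j + 2) : ℝ) * t ^ (j + 1)) k]
    have h2 : (1 + t) ^ (k + 1) = 1 + ∑ j ∈ Finset.range (k + 1),
        ((k + 1).choose (j + 1) : ℝ) * t ^ (j + 1) := by
      rw [add_comm 1 t, add_pow, Finset.sum_range_succ']
      simp [mul_comm, add_comm]
    rw [h2, Nat.choose_eq_zero_of_lt (show k + 1 < k + 2 by omega)]
    push_cast; ring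

/-- Shifting a nonnegative entire power series to the base point one. -/
lemma shift_series (p : ℕ → ℝ) (hp : ∀ m, 0 ≤ p m) (G : ℝ → ℝ)
    (hG : ∀ s, HasSum (fun m => p m * s ^ m) (G s)) :
    (∀ n, Summable fun m => p m * (m.choose n : ℝ)) ∧
    ∀ t, HasSum (fun n => (∑' m, p m * (m.choose n : ℝ)) * t ^ n) (G (1 + t)) := by
  have inner : ∀ (t : ℝ) (m : ℕ),
      HasSum (fun n => p m * (m.choose n : ℝ) * t ^ n) (p m * (1 + t) ^ m) := by
    intro t m
    have h1 : p m * (1 + t) ^ m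
        = ∑ n ∈ Finset.range (m + 1), p m * (m.choose n : ℝ) * t ^ n := by
      rw [add_comm 1 t, add_pow, Finset.mul_sum]
      exact Finset.sum_congr rfl fun n _ => by simp; ring
    rw [h1]
    refine hasSum_sum_of_ne_finset_zero fun n hn => ?_
    rw [Nat.choose_eq_zero_of_lt (by simpa using hn)]
    simp
  have summ : ∀ t : ℝ, Summable (fun x : ℕ × ℕ => p x.1 * (x.1.choose x.2 : ℝ) * t ^ x.2) := by
    intro t
    rw [← summable_abs_iff]
    have he : (fun x : ℕ × ℕ => |p x.1 * (x.1.choose x.2 : ℝ) * t ^ x.2|)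
        = fun x : ℕ × ℕ => p x.1 * (x.1.choose x.2 : ℝ) * |t| ^ x.2 := by
      funext x
      rw [abs_mul, abs_mul, abs_of_nonneg (hp _), Nat.abs_cast, abs_pow]
    rw [he, summable_prod_of_nonneg (fun x => by have := hp x.1; positivity)]
    refine ⟨fun m => (inner |t| m).summable, ?_⟩
    simp only [(inner |t| _).tsum_eq]
    exact (hG _).summable
  have sw : ∀ t : ℝ, Summable (fun x : ℕ × ℕ => p x.2 * (x.2.choose x.1 : ℝ) * t ^ x.1) :=
    fun t => (Equiv.prodComm ℕ ℕ).summable_iff.2 (summ t)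
  have col : ∀ n, Summable fun m => p m * (m.choose n : ℝ) := by
    intro n
    simpa using (sw 1).prod_factor n
  refine ⟨col, fun t => ?_⟩
  have h1 : HasSum (fun x : ℕ × ℕ => p x.1 * (x.1.choose x.2 : ℝ) * t ^ x.2) (G (1 + t)) := by
    have h2 := (summ t).hasSum
    have h3 := h2.prod_fiberwise (inner t)
    rwa [h3.unique (hG (1 + t))] at h2
  have h4 := (Equiv.prodComm ℕ ℕ).hasSum_iff.2 h1
  exact h4.prod_fiberwise fun n => (col n).hasSum.mul_right (t ^ n)

/-- The series defining the `n`-th factorial moment of the Poisson distribution of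
order `k` converges, and equals the explicit combinatorial sum
`n! ∑_{n₁+2n₂+⋯+k n_k = n} ∏_{j=1}^k (λ^{n_j}/n_j!) C(k+1, j+1)^{n_j}`. -/
theorem factorialMoment_poissonOrderK (k : ℕ) (hk : 1 ≤ k) (lam : ℝ) (hlam : 0 < lam)
    (n : ℕ) :
    HasSum (fun m : ℕ => (m.descFactorial n : ℝ) * poissonOrderK k lam m)
      ((n.factorial : ℝ) *
        ∑ f ∈ orderkTuples k n, ∏ j : Fin k,
          lam ^ (f j).1 / (f j).1.factorial * ((k + 1).choose (j.1 + 2) : ℝ) ^ (f j).1) := by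
  have hp : ∀ m, 0 ≤ poissonOrderK k lam m := fun m => by
    unfold poissonOrderK
    positivity
  have hG : ∀ s, HasSum (fun m => poissonOrderK k lam m * s ^ m)
      (Real.exp (-(k * lam)) * Real.exp (∑ j : Fin k, lam * s ^ (j.1 + 1))) := fun s => by
    simpa only [poissonOrderK, mul_assoc] using
      (hasSum_gen k (fun _ => lam) s).mul_left (Real.exp (-(k * lam)))
  obtain ⟨hs, ht⟩ := shift_series _ hp _ hG
  have hb := hasSum_gen k (fun j => lam * ((k + 1).choose (j.1 + 2) : ℝ))
  have heq : ∀ t : ℝ, Real.exp (-(k * lam)) * Real.exp (∑ j : Fin k, lam * (1 + t) ^ (j.1 + 1))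
      = Real.exp (∑ j : Fin k, lam * ((k + 1).choose (j.1 + 2) : ℝ) * t ^ (j.1 + 1)) := by
    intro t
    rw [← Real.exp_add, ← Finset.mul_sum, sum_binom]
    simp only [mul_assoc, ← Finset.mul_sum]
    congr 1
    ring
  simp only [heq] at ht
  have hc := congrFun (coeff_unique _ _ _ ht hb) n
  have h := (hs n).hasSum.mul_left (n.factorial : ℝ)
  rw [hc] at h
  convert! h using 1
  · funext m
    rw [Nat.descFactorial_eq_factorial_mul_choose]
    push_cast; ring
  · congr 1
    refine Finset.sum_congr rfl fun f _ => Finset.prod_congr rfl fun j _ => ?_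
    rw [mul_pow]; ring
end

section
/- For every integer k ≥ 1 and every real λ > 0, the variance of the Poisson distribution of order k is σ²_k = Σ_{m=0}^∞ (m − μ_k)² · P_m(k,λ) = (1² + 2² + ⋯ + k²)·λ = k(k+1)(2k+1)λ/6, where μ_k = k(k+1)λ/2 is the mean, the series converging absolutely. -/
open scoped BigOperators

lemma pk_m0 (x : ℝ) : HasSum (fun n : ℕ => x ^ n / n.factorial) (Real.exp x) := by
  rw [Real.exp_eq_exp_ℝ]
  exact NormedSpace.expSeries_div_hasSum_exp x

lemma pk_cast {α : Type} {f g : α → ℝ} {a b : ℝ} (h : HasSum f a) (hf : ∀ x, g x = f x)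
    (hb : b = a) : HasSum g b := by
  have e : g = f := funext hf
  rw [e, hb]
  exact h

lemma pk_m1 (x : ℝ) : HasSum (fun n : ℕ => (n : ℝ) * (x ^ n / n.factorial)) (x * Real.exp x) := by
  rw [← hasSum_nat_add_iff' 1]
  simp only [Finset.sum_range_one, Nat.cast_zero, zero_mul, sub_zero]
  refine pk_cast ((pk_m0 x).mul_left x) ?_ rfl
  intro n
  have : (n.factorial : ℝ) ≠ 0 := by positivity
  have h2 : (n : ℝ) + 1 ≠ 0 := by positivity
  rw [Nat.factorial_succ]
  push_cast
  field_simp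
  ring

lemma pk_m2 (x : ℝ) : HasSum (fun n : ℕ => (n : ℝ) ^ 2 * (x ^ n / n.factorial))
    ((x ^ 2 + x) * Real.exp x) := by
  rw [← hasSum_nat_add_iff' 1]
  simp only [Finset.sum_range_one, Nat.cast_zero, ne_eq, OfNat.ofNat_ne_zero, not_false_eq_true,
    zero_pow, zero_mul, sub_zero]
  have h := (((pk_m1 x).add (pk_m0 x)).mul_left x)
  have e : x * (x * Real.exp x + Real.exp x) = (x ^ 2 + x) * Real.exp x := by ring
  rw [e] at h
  refine pk_cast h ?_ rfl
  intro n
  have : (n.factorial : ℝ) ≠ 0 := by positivity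
  have h2 : (n : ℝ) + 1 ≠ 0 := by positivity
  rw [Nat.factorial_succ]
  push_cast
  field_simp
  ring

lemma pk_mul {α β : Type} {f : α → ℝ} {g : β → ℝ} {a b : ℝ} (hf : HasSum f a) (hg : HasSum g b) :
    HasSum (fun p : α × β => f p.1 * g p.2) (a * b) :=
  hf.mul hg (summable_mul_of_summable_norm hf.summable.norm hg.summable.norm)

lemma pk_multi (x : ℝ) (k : ℕ) (a : Fin k → ℝ) :
    HasSum (fun f : Fin k → ℕ => ∏ j, x ^ f j / (f j).factorial) (Real.exp (k * x)) ∧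
    HasSum (fun f : Fin k → ℕ => (∑ j, a j * f j) * ∏ j, x ^ f j / (f j).factorial)
      (Real.exp (k * x) * (x * ∑ j, a j)) ∧
    HasSum (fun f : Fin k → ℕ => (∑ j, a j * f j) ^ 2 * ∏ j, x ^ f j / (f j).factorial)
      (Real.exp (k * x) * (x * ∑ j, a j ^ 2 + (x * ∑ j, a j) ^ 2)) := by
  induction k with
  | zero =>
    refine ⟨?_, ?_, ?_⟩
    · simpa using hasSum_unique (fun f : Fin 0 → ℕ => ∏ j, x ^ f j / (f j).factorial)
    · simpa using hasSum_zero
    · simpa using hasSum_zero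
  | succ k ih =>
    obtain ⟨h0, h1, h2⟩ := ih (fun j => a j.succ)
    have g0 := pk_m0 x
    have g1 := (pk_m1 x).mul_left (a 0)
    have g2 := (pk_m2 x).mul_left (a 0 ^ 2)
    have ee : Real.exp ((k + 1 : ℕ) * x) = Real.exp x * Real.exp (k * x) := by
      rw [← Real.exp_add]; congr 1; push_cast; ring
    refine ⟨?_, ?_, ?_⟩
    · rw [← (Fin.consEquiv (fun _ : Fin (k + 1) => ℕ)).hasSum_iff, ee]
      convert (pk_mul g0 h0) using 1
      funext ⟨n, f⟩
      simp [Fin.consEquiv, Fin.prod_univ_succ]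
      ring
    · rw [← (Fin.consEquiv (fun _ : Fin (k + 1) => ℕ)).hasSum_iff, ee]
      convert (pk_mul g1 h0).add (pk_mul g0 h1) using 1
      · funext ⟨n, f⟩
        simp [Fin.consEquiv, Fin.prod_univ_succ, Fin.sum_univ_succ]
        ring
      · rw [Fin.sum_univ_succ]; ring
    · rw [← (Fin.consEquiv (fun _ : Fin (k + 1) => ℕ)).hasSum_iff, ee]
      convert ((pk_mul g2 h0).add ((pk_mul g1 h1).mul_left 2)).add (pk_mul g0 h2) using 1
      · funext ⟨n, f⟩
        simp [Fin.consEquiv, Fin.prod_univ_succ, Fin.sum_univ_succ]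
        ring
      · rw [Fin.sum_univ_succ, Fin.sum_univ_succ]; ring

lemma pk_bij (k : ℕ) : Function.Bijective
    (fun p : (Σ m : ℕ, {f // f ∈ orderkTuples k m}) => (fun j => (p.2.1 j).1 : Fin k → ℕ)) := by
  constructor
  · rintro ⟨m, f, hf⟩ ⟨m', f', hf'⟩ h
    have h' : ∀ j, (f j).1 = (f' j).1 := fun j => congrFun h j
    have hm : m = m' := by
      simp only [orderkTuples, Finset.mem_filter, Finset.mem_univ, true_and] at hf hf'
      rw [← hf, ← hf']
      simp only [h']
    subst hm
    have : f = f' := funext fun j => Fin.ext (h' j)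
    subst this
    rfl
  · intro g
    have hb : ∀ j, g j < (∑ j : Fin k, (j.1 + 1) * g j) + 1 := by
      intro j
      have := Finset.single_le_sum (f := fun j : Fin k => (j.1 + 1) * g j)
        (fun _ _ => Nat.zero_le _) (Finset.mem_univ j)
      nlinarith [Nat.zero_le (j.1 * g j)]
    refine ⟨⟨∑ j : Fin k, (j.1 + 1) * g j, fun j => ⟨g j, hb j⟩, ?_⟩, rfl⟩
    simp [orderkTuples]

lemma pk_s1 (k : ℕ) : ∑ j : Fin k, ((j.1 : ℝ) + 1) = (k : ℝ) * (k + 1) / 2 := by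
  induction k with
  | zero => simp
  | succ k ih => rw [Fin.sum_univ_castSucc]; simp only [Fin.val_castSucc, ih, Fin.val_last]; push_cast; ring

lemma pk_s2 (k : ℕ) : ∑ j : Fin k, ((j.1 : ℝ) + 1) ^ 2 = (k : ℝ) * (k + 1) * (2 * k + 1) / 6 := by
  induction k with
  | zero => simp
  | succ k ih => rw [Fin.sum_univ_castSucc]; simp only [Fin.val_castSucc, ih, Fin.val_last]; push_cast; ring

lemma pk_s3 (k : ℕ) : ∑ i ∈ Finset.Icc 1 k, (i : ℝ) ^ 2 = (k : ℝ) * (k + 1) * (2 * k + 1) / 6 := by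
  induction k with
  | zero => simp
  | succ k ih => rw [Finset.sum_Icc_succ_top (by omega), ih]; push_cast; ring

lemma pk_main (k : ℕ) (lam : ℝ) :
    HasSum (fun m : ℕ =>
        ((m : ℝ) - (k : ℝ) * (k + 1) / 2 * lam) ^ 2 * poissonOrderK k lam m)
      ((k : ℝ) * (k + 1) * (2 * k + 1) / 6 * lam) := by
  obtain ⟨h0, h1, h2⟩ := pk_multi lam k (fun j => (j.1 : ℝ) + 1)
  rw [pk_s1] at h1 h2
  rw [pk_s2] at h2
  set μ : ℝ := (k : ℝ) * (k + 1) / 2 * lam with hμ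
  have H := (((h2.sub (h1.mul_left (2 * μ))).add (h0.mul_left (μ ^ 2))).mul_left
    (Real.exp (-(k * lam))))
  rw [← (Equiv.ofBijective _ (pk_bij k)).hasSum_iff] at H
  have H2 := H.sigma (g := fun m : ℕ => ((m : ℝ) - μ) ^ 2 * poissonOrderK k lam m) ?_
  · refine pk_cast H2 (fun _ => rfl) ?_
    have : Real.exp (-(k * lam)) * Real.exp (k * lam) = 1 := by
      rw [← Real.exp_add]; simp
    rw [hμ]
    linear_combination (-(k : ℝ) * (k + 1) * (2 * k + 1) / 6 * lam) * this
  · intro m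
    convert hasSum_fintype _ using 1
    simp only [poissonOrderK]
    rw [← Finset.sum_coe_sort, Finset.mul_sum, Finset.mul_sum]
    refine Finset.sum_congr rfl ?_
    rintro ⟨f, hf⟩ _
    simp only [orderkTuples, Finset.mem_filter, Finset.mem_univ, true_and] at hf
    have hm : ∑ j : Fin k, ((j.1 : ℝ) + 1) * ((f j).1 : ℝ) = m := by
      exact_mod_cast hf
    simp only [Function.comp, Equiv.ofBijective_apply, hm]
    ring

/-- The variance of the Poisson distribution of order `k` is
`σ²_k = ∑_{m=0}^∞ (m − μ_k)² P_m(k,λ) = (1² + 2² + ⋯ + k²) λ = k(k+1)(2k+1)λ/6`,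
where `μ_k = k(k+1)λ/2` is the mean, the series converging absolutely. -/
theorem poissonOrderK_variance (k : ℕ) (hk : 1 ≤ k) (lam : ℝ) (hlam : 0 < lam) :
    Summable (fun m : ℕ =>
      |((m : ℝ) - (k : ℝ) * (k + 1) / 2 * lam) ^ 2 * poissonOrderK k lam m|) ∧
    HasSum (fun m : ℕ =>
        ((m : ℝ) - (k : ℝ) * (k + 1) / 2 * lam) ^ 2 * poissonOrderK k lam m)
      ((k : ℝ) * (k + 1) * (2 * k + 1) / 6 * lam) ∧
    (∑ i ∈ Finset.Icc 1 k, (i : ℝ) ^ 2) * lam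
      = (k : ℝ) * (k + 1) * (2 * k + 1) / 6 * lam := by
  exact ⟨(pk_main k lam).summable.abs, pk_main k lam, by rw [pk_s3]⟩
end

section
/- For k = 2, every real λ > 0, and every integer n ≥ 1, the n-th factorial moment of the Poisson distribution of order 2 is M_{(n)}(2,λ) = Σ_{s=0}^{⌊n/2⌋} [n!/((n−2s)!·s!)] · κ₁^{n−2s} · κ₂^{s} · λ^{n−s}, where κ₁ = C(3,2) = 3 and κ₂ = C(3,3) = 1. -/
open scoped BigOperators

lemma hasSum_cast {ι : Type} {f g : ι → ℝ} {a b : ℝ} (h : HasSum g b)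
    (hf : ∀ x, f x = g x) (hab : a = b) : HasSum f a := by
  rw [hab, show f = g from funext hf]
  exact h

/-- Unnormalised joint weight. -/
noncomputable def pwt (lam : ℝ) (p : ℕ × ℕ) : ℝ :=
  (lam ^ p.1 / p.1.factorial) * (lam ^ p.2 / p.2.factorial)

lemma pw_succ (lam : ℝ) (a : ℕ) :
    ((a + 1 : ℕ) : ℝ) * (lam ^ (a + 1) / (a + 1).factorial) = lam * (lam ^ a / a.factorial) := by
  have h1 : ((a : ℝ) + 1) ≠ 0 := by positivity
  have h2 : (a.factorial : ℝ) ≠ 0 := by positivity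
  rw [Nat.factorial_succ]
  push_cast
  field_simp
  ring

lemma shift_one (lam : ℝ) (g : ℕ → ℝ) (S : ℝ)
    (h : HasSum (fun p : ℕ × ℕ => g (p.1 + 2 * p.2 + 1) * pwt lam p) S) :
    HasSum (fun p : ℕ × ℕ => (p.1 : ℝ) * g (p.1 + 2 * p.2) * pwt lam p) (lam * S) := by
  have hinj : Function.Injective (fun p : ℕ × ℕ => (p.1 + 1, p.2)) := by
    rintro ⟨a, b⟩ ⟨c, d⟩ h
    simpa using h
  rw [← hinj.hasSum_iff]
  · refine hasSum_cast (h.mul_left lam) (fun p => ?_) rfl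
    have := pw_succ lam p.1
    simp only [Function.comp, pwt]
    rw [show p.1 + 1 + 2 * p.2 = p.1 + 2 * p.2 + 1 by ring]
    linear_combination (g (p.1 + 2 * p.2 + 1) * (lam ^ p.2 / p.2.factorial)) * this
  · rintro ⟨a, b⟩ hx
    rcases a with _ | a
    · simp
    · exact absurd ⟨(a, b), rfl⟩ hx

lemma shift_two (lam : ℝ) (g : ℕ → ℝ) (S : ℝ)
    (h : HasSum (fun p : ℕ × ℕ => g (p.1 + 2 * p.2 + 2) * pwt lam p) S) :
    HasSum (fun p : ℕ × ℕ => (p.2 : ℝ) * g (p.1 + 2 * p.2) * pwt lam p) (lam * S) := by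
  have hinj : Function.Injective (fun p : ℕ × ℕ => (p.1, p.2 + 1)) := by
    rintro ⟨a, b⟩ ⟨c, d⟩ h
    simpa using h
  rw [← hinj.hasSum_iff]
  · refine hasSum_cast (h.mul_left lam) (fun p => ?_) rfl
    have := pw_succ lam p.2
    simp only [Function.comp, pwt]
    rw [show p.1 + 2 * (p.2 + 1) = p.1 + 2 * p.2 + 2 by ring]
    linear_combination (g (p.1 + 2 * p.2 + 2) * (lam ^ p.1 / p.1.factorial)) * this
  · rintro ⟨a, b⟩ hx
    rcases b with _ | b
    · simp
    · exact absurd ⟨(a, b), rfl⟩ hx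

lemma descFact_succ_add (x n : ℕ) :
    (x + 1).descFactorial (n + 1) = x.descFactorial (n + 1) + (n + 1) * x.descFactorial n := by
  rw [Nat.succ_descFactorial_succ, Nat.descFactorial_succ, ← add_mul]
  rcases le_or_gt n x with h | h
  · congr 1; omega
  · rw [Nat.descFactorial_of_lt h]; simp

lemma mul_pred_descFact (x n : ℕ) : x * (x - 1).descFactorial n = x.descFactorial (n + 1) := by
  rcases x with _ | x
  · simp
  · rw [Nat.succ_descFactorial_succ, Nat.add_sub_cancel]

lemma moment_step (lam : ℝ) (n : ℕ) (A B : ℝ)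
    (hA : HasSum (fun p : ℕ × ℕ => ((p.1 + 2 * p.2).descFactorial n : ℝ) * pwt lam p) A)
    (hB : HasSum (fun p : ℕ × ℕ => ((p.1 + 2 * p.2 + 1).descFactorial n : ℝ) * pwt lam p) B) :
    HasSum (fun p : ℕ × ℕ => ((p.1 + 2 * p.2).descFactorial (n + 1) : ℝ) * pwt lam p)
      (lam * A + 2 * (lam * B)) := by
  have h1 := shift_one lam (fun x => ((x - 1).descFactorial n : ℝ)) A (by simpa using hA)
  have h2 := shift_two lam (fun x => ((x - 1).descFactorial n : ℝ)) B (by simpa using hB)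
  refine hasSum_cast (h1.add (h2.mul_left 2)) (fun p => ?_) rfl
  rw [← mul_pred_descFact]
  push_cast
  ring

/-- Coefficients. -/
noncomputable def dco (lam : ℝ) (n s : ℕ) : ℝ :=
  if 2 * s ≤ n then (n.factorial : ℝ) / ((n - 2 * s).factorial * s.factorial) *
    3 ^ (n - 2 * s) * lam ^ (n - s) else 0

/-- Moments. -/
noncomputable def Smom (lam : ℝ) (n : ℕ) : ℝ := ∑ s ∈ Finset.range (n / 2 + 1), dco lam n s

lemma Smom_eq (lam : ℝ) (n N : ℕ) (h : n / 2 + 1 ≤ N) :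
    Smom lam n = ∑ s ∈ Finset.range N, dco lam n s := by
  unfold Smom
  apply Finset.sum_subset
  · intro x; simp only [Finset.mem_range]; omega
  · intro x _ hx
    simp only [Finset.mem_range] at hx
    unfold dco
    rw [if_neg (by omega)]

lemma dco_zero (lam : ℝ) (n : ℕ) : dco lam (n + 1) 0 = 3 * lam * dco lam n 0 := by
  have h : ∀ m : ℕ, dco lam m 0 = 3 ^ m * lam ^ m := by
    intro m
    have : (m.factorial : ℝ) ≠ 0 := by positivity
    simp [dco, this]
  rw [h, h]; ring

lemma dco_succ (lam : ℝ) (n s : ℕ) :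
    dco lam (n + 2) (s + 1) =
      3 * lam * dco lam (n + 1) (s + 1) + 2 * lam * (n + 1) * dco lam n s := by
  unfold dco
  rcases lt_trichotomy (2 * s) n with h | h | h
  · obtain ⟨q, rfl⟩ := Nat.exists_eq_add_of_lt h
    rw [if_pos (by omega), if_pos (by omega), if_pos (by omega)]
    rw [show 2 * s + q + 1 + 2 - 2 * (s + 1) = q + 1 by omega,
      show 2 * s + q + 1 + 1 - 2 * (s + 1) = q by omega,
      show 2 * s + q + 1 - 2 * s = q + 1 by omega,
      show 2 * s + q + 1 + 2 - (s + 1) = s + q + 2 by omega,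
      show 2 * s + q + 1 + 1 - (s + 1) = s + q + 1 by omega,
      show 2 * s + q + 1 - s = s + q + 1 by omega]
    rw [Nat.factorial_succ (2 * s + q + 1 + 1), Nat.factorial_succ (2 * s + q + 1),
      Nat.factorial_succ q, Nat.factorial_succ s]
    have h1 : (q.factorial : ℝ) ≠ 0 := by positivity
    have h2 : (s.factorial : ℝ) ≠ 0 := by positivity
    have h3 : (q : ℝ) + 1 ≠ 0 := by positivity
    have h4 : (s : ℝ) + 1 ≠ 0 := by positivity
    push_cast
    field_simp
    ring
  · subst h
    rw [if_pos (by omega), if_neg (by omega), if_pos (by omega)]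
    rw [show 2 * s + 2 - 2 * (s + 1) = 0 by omega,
      show 2 * s - 2 * s = 0 by omega,
      show 2 * s + 2 - (s + 1) = s + 1 by omega,
      show 2 * s - s = s by omega]
    rw [Nat.factorial_succ (2 * s + 1), Nat.factorial_succ (2 * s), Nat.factorial_succ s]
    have h2 : (s.factorial : ℝ) ≠ 0 := by positivity
    have h4 : (s : ℝ) + 1 ≠ 0 := by positivity
    push_cast
    field_simp
    ring
  · rw [if_neg (by omega), if_neg (by omega), if_neg (by omega)]
    simp

lemma Smom_rec (lam : ℝ) (n : ℕ) :
    Smom lam (n + 2) = 3 * lam * Smom lam (n + 1) + 2 * lam * (n + 1) * Smom lam n := by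
  rw [Smom_eq lam (n + 2) (n + 3) (by omega), Smom_eq lam (n + 1) (n + 3) (by omega),
    Smom_eq lam n (n + 2) (by omega), Finset.sum_range_succ', Finset.sum_range_succ' _ (n + 2),
    dco_zero, mul_add, Finset.mul_sum, Finset.mul_sum]
  simp only [dco_succ]
  rw [Finset.sum_add_distrib]
  ring

lemma moment_all (lam : ℝ) (n : ℕ) :
    HasSum (fun p : ℕ × ℕ => ((p.1 + 2 * p.2).descFactorial n : ℝ) * pwt lam p)
      (Real.exp (2 * lam) * Smom lam n) := by
  have h0 : HasSum (fun p : ℕ × ℕ => pwt lam p) (Real.exp (2 * lam)) := by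
    have he : HasSum (fun a : ℕ => lam ^ a / a.factorial) (Real.exp lam) := by
      rw [Real.exp_eq_exp_ℝ]
      exact NormedSpace.expSeries_div_hasSum_exp lam
    have hs : Summable (fun a : ℕ => ‖lam ^ a / (a.factorial : ℝ)‖) := he.summable.norm
    have := he.mul he (summable_mul_of_summable_norm hs hs)
    rw [two_mul, Real.exp_add]
    exact this
  induction n using Nat.strong_induction_on with
  | _ n ih =>
    rcases n with _ | _ | n
    · simpa [Smom, dco] using h0
    · have := moment_step lam 0 _ _ (by simpa using h0) (by simpa using h0)
      refine hasSum_cast this (fun p => rfl) ?_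
      simp [Smom, dco]
      ring
    · have hA := ih (n + 1) (by omega)
      have hC := ih n (by omega)
      have hB : HasSum (fun p : ℕ × ℕ =>
          ((p.1 + 2 * p.2 + 1).descFactorial (n + 1) : ℝ) * pwt lam p)
          (Real.exp (2 * lam) * Smom lam (n + 1) +
            ((n : ℝ) + 1) * (Real.exp (2 * lam) * Smom lam n)) := by
        refine hasSum_cast (hA.add (hC.mul_left ((n : ℝ) + 1))) (fun p => ?_) rfl
        rw [descFact_succ_add]
        push_cast
        ring
      refine hasSum_cast (moment_step lam (n + 1) _ _ hA hB) (fun p => rfl) ?_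
      rw [Smom_rec]
      ring

lemma fiber_sum (lam : ℝ) (m : ℕ) :
    HasSum (fun p : {p : ℕ × ℕ // p.1 + 2 * p.2 = m} => pwt lam p.1)
      (∑ f ∈ orderkTuples 2 m, ∏ j : Fin 2, lam ^ (f j).1 / (f j).1.factorial) := by
  have hmem : ∀ f : Fin 2 → Fin (m + 1), f ∈ orderkTuples 2 m ↔ (f 0).1 + 2 * (f 1).1 = m := by
    intro f
    simp [orderkTuples, Fin.sum_univ_two]
  let e : {f // f ∈ orderkTuples 2 m} ≃ {p : ℕ × ℕ // p.1 + 2 * p.2 = m} :=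
    { toFun := fun f => ⟨((f.1 0).1, (f.1 1).1), (hmem f.1).1 f.2⟩
      invFun := fun p => ⟨![⟨p.1.1, by have := p.2; omega⟩, ⟨p.1.2, by have := p.2; omega⟩],
        (hmem _).2 (by simpa using p.2)⟩
      left_inv := by
        rintro ⟨f, hf⟩
        apply Subtype.ext
        funext i
        fin_cases i <;> rfl
      right_inv := by
        rintro ⟨⟨a, b⟩, hp⟩
        rfl }
  rw [← e.hasSum_iff]
  refine hasSum_cast (Finset.hasSum (orderkTuples 2 m)
    (fun f => ∏ j : Fin 2, lam ^ (f j).1 / ((f j).1.factorial : ℝ))) (fun f => ?_) rfl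
  simp only [Function.comp, Fin.prod_univ_two]
  rfl

/-- For `k = 2`, `λ > 0` and `n ≥ 1`, the `n`-th factorial moment of the Poisson
distribution of order 2 is
`M_{(n)}(2,λ) = ∑_{s=0}^{⌊n/2⌋} n!/((n−2s)! s!) κ₁^{n−2s} κ₂^{s} λ^{n−s}`
with `κ₁ = C(3,2) = 3` and `κ₂ = C(3,3) = 1`. -/
theorem poissonOrderTwo_factorialMoment (lam : ℝ) (hlam : 0 < lam) (n : ℕ) (hn : 1 ≤ n) :
    HasSum (fun m : ℕ => (m.descFactorial n : ℝ) * poissonOrderK 2 lam m)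
      (∑ s ∈ Finset.range (n / 2 + 1),
        (n.factorial : ℝ) / ((n - 2 * s).factorial * s.factorial) *
          ((3 : ℕ).choose 2 : ℝ) ^ (n - 2 * s) * ((3 : ℕ).choose 3 : ℝ) ^ s *
          lam ^ (n - s)) := by
  have h1 := (moment_all lam n).mul_left (Real.exp (-(2 * lam)))
  have h2 := (Equiv.sigmaFiberEquiv (fun p : ℕ × ℕ => p.1 + 2 * p.2)).hasSum_iff.2 h1
  have h3 := h2.sigma (g := fun m : ℕ => (m.descFactorial n : ℝ) * poissonOrderK 2 lam m) (by
    intro m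
    refine hasSum_cast
      ((fiber_sum lam m).mul_left ((m.descFactorial n : ℝ) * Real.exp (-(2 * lam))))
      (fun p => ?_) ?_
    · obtain ⟨p, hp⟩ := p
      simp only [Function.comp, Equiv.sigmaFiberEquiv, Equiv.coe_fn_mk]
      rw [hp]
      ring
    · simp only [poissonOrderK]
      push_cast
      ring)
  refine hasSum_cast h3 (fun m => rfl) ?_
  rw [← mul_assoc, ← Real.exp_add]
  simp only [neg_add_cancel, Real.exp_zero, one_mul, Smom]
  apply Finset.sum_congr rfl
  intro s hs
  rw [Finset.mem_range] at hs
  rw [dco, if_pos (by omega)]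
  norm_num [Nat.choose]
end

section
/- For every integer k ≥ 1 and every real λ > 0, the second factorial moment of the Poisson distribution of order k is M_{(2)}(k,λ) = (k(k+1)/2)² λ² + ((k−1)k(k+1)/3) λ. -/
open scoped BigOperators

/-- `κ_j = C(k+1, j+1)`, as a real number (it vanishes for `j > k`). -/
noncomputable def kappa (k j : ℕ) : ℝ := ((k + 1).choose (j + 1) : ℝ)

/-- Unnormalised Poisson weight. -/
noncomputable def pw (lam : ℝ) (n : ℕ) : ℝ := lam ^ n / n.factorial

/-- Product weight of a tuple. -/
noncomputable def tw (k : ℕ) (lam : ℝ) (f : Fin k → ℕ) : ℝ := ∏ j : Fin k, pw lam (f j)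

/-- Weighted size of a tuple. -/
def ts (k : ℕ) (f : Fin k → ℕ) : ℕ := ∑ j : Fin k, (j.1 + 1) * f j

lemma pw_zero (lam : ℝ) : HasSum (pw lam) (Real.exp lam) := by
  have h := NormedSpace.expSeries_div_hasSum_exp (𝔸 := ℝ) lam
  rw [← Real.exp_eq_exp_ℝ] at h
  exact h

lemma pw_succ_s7 (lam : ℝ) (n : ℕ) : ((n : ℝ) + 1) * pw lam (n + 1) = lam * pw lam n := by
  unfold pw
  rw [Nat.factorial_succ]
  have := Nat.factorial_ne_zero n
  push_cast
  field_simp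
  ring

lemma pw_one (lam : ℝ) : HasSum (fun n : ℕ => (n : ℝ) * pw lam n) (lam * Real.exp lam) := by
  rw [← hasSum_nat_add_iff' 1]
  have h := (pw_zero lam).mul_left lam
  simp only [Finset.range_one, Finset.sum_singleton, Nat.cast_zero, zero_mul, sub_zero]
  refine h.congr_fun ?_ <;> intro n
  push_cast
  rw [pw_succ_s7]

lemma pw_two (lam : ℝ) : HasSum (fun n : ℕ => (n : ℝ) * ((n : ℝ) - 1) * pw lam n)
    (lam * (lam * Real.exp lam)) := by
  rw [← hasSum_nat_add_iff' 1]
  have h := (pw_one lam).mul_left lam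
  simp only [Finset.range_one, Finset.sum_singleton, Nat.cast_zero, zero_mul, sub_zero]
  refine h.congr_fun ?_ <;> intro n
  push_cast
  linear_combination (n : ℝ) * pw_succ_s7 lam n

lemma pw_nonneg {lam : ℝ} (h : 0 < lam) (n : ℕ) : 0 ≤ pw lam n := by
  unfold pw; positivity

lemma tw_nonneg {lam : ℝ} (h : 0 < lam) (k : ℕ) (f : Fin k → ℕ) : 0 ≤ tw k lam f :=
  Finset.prod_nonneg fun _ _ => pw_nonneg h _

lemma nat_desc_nonneg (n : ℕ) : 0 ≤ (n : ℝ) * ((n : ℝ) - 1) := by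
  rcases n with _ | n
  · simp
  · push_cast
    have : (0 : ℝ) ≤ n := n.cast_nonneg
    nlinarith

lemma hasSum_prod_mul {α β : Type*} {f : α → ℝ} {g : β → ℝ} {a b : ℝ} (hf : HasSum f a)
    (hg : HasSum g b) (hf0 : ∀ x, 0 ≤ f x) (hg0 : ∀ x, 0 ≤ g x) :
    HasSum (fun x : α × β => f x.1 * g x.2) (a * b) :=
  hf.mul hg (hf.summable.mul_of_nonneg hg.summable hf0 hg0)

lemma tuple_moments (lam : ℝ) (hlam : 0 < lam) (k : ℕ) :
    HasSum (tw k lam) (Real.exp (k * lam)) ∧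
    HasSum (fun f => (ts k f : ℝ) * tw k lam f)
      ((k : ℝ) * (k + 1) / 2 * lam * Real.exp (k * lam)) ∧
    HasSum (fun f => (ts k f : ℝ) * ((ts k f : ℝ) - 1) * tw k lam f)
      ((((k : ℝ) * (k + 1) / 2) ^ 2 * lam ^ 2 + ((k : ℝ) - 1) * k * (k + 1) / 3 * lam)
        * Real.exp (k * lam)) := by
  induction k with
  | zero =>
    refine ⟨?_, ?_, ?_⟩
    · convert hasSum_unique (tw 0 lam) using 1
      simp [tw]
    · simp [ts, hasSum_zero]
    · simp [ts, hasSum_zero]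
  | succ k ih =>
    obtain ⟨h0, h1, h2⟩ := ih
    have t0 := tw_nonneg hlam k
    have p0 := pw_nonneg hlam
    have t1 : ∀ f, 0 ≤ (ts k f : ℝ) * tw k lam f := fun f =>
      mul_nonneg (Nat.cast_nonneg _) (t0 f)
    have t2 : ∀ f, 0 ≤ (ts k f : ℝ) * ((ts k f : ℝ) - 1) * tw k lam f := fun f =>
      mul_nonneg (nat_desc_nonneg _) (t0 f)
    have p1 : ∀ n : ℕ, 0 ≤ (n : ℝ) * pw lam n := fun f =>
      mul_nonneg (Nat.cast_nonneg _) (p0 f)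
    have p2 : ∀ n : ℕ, 0 ≤ (n : ℝ) * ((n : ℝ) - 1) * pw lam n := fun f =>
      mul_nonneg (nat_desc_nonneg _) (p0 f)
    have h00 := hasSum_prod_mul h0 (pw_zero lam) t0 p0
    have h01 := hasSum_prod_mul h0 (pw_one lam) t0 p1
    have h02 := hasSum_prod_mul h0 (pw_two lam) t0 p2
    have h10 := hasSum_prod_mul h1 (pw_zero lam) t1 p0
    have h11 := hasSum_prod_mul h1 (pw_one lam) t1 p1
    have h20 := hasSum_prod_mul h2 (pw_zero lam) t2 p0
    let e : (Fin k → ℕ) × ℕ ≃ (Fin (k + 1) → ℕ) :=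
      (Equiv.prodComm _ _).trans (Fin.snocEquiv (fun _ => ℕ))
    have etw : ∀ x, tw (k + 1) lam (e x) = tw k lam x.1 * pw lam x.2 := by
      intro x
      simp [e, tw, Fin.prod_univ_castSucc, Fin.snocEquiv]
    have ets : ∀ x, ts (k + 1) (e x) = ts k x.1 + (k + 1) * x.2 := by
      intro x
      simp [e, ts, Fin.sum_univ_castSucc, Fin.snocEquiv]
    have hexp : Real.exp (((k + 1 : ℕ) : ℝ) * lam) = Real.exp (k * lam) * Real.exp lam := by
      rw [← Real.exp_add]; congr 1; push_cast; ring
    rw [hexp]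
    refine ⟨?_, ?_, ?_⟩
    · rw [← e.hasSum_iff]
      convert h00 using 1
      funext x
      exact etw x
    · rw [← e.hasSum_iff]
      convert h10.add (h01.mul_left ((k : ℝ) + 1)) using 1
      · funext x
        simp only [Function.comp, etw, ets]
        push_cast
        ring
      · push_cast
        ring
    · rw [← e.hasSum_iff]
      convert (((h20.add (h11.mul_left (2 * ((k : ℝ) + 1)))).add
        (h02.mul_left (((k : ℝ) + 1) ^ 2))).add (h01.mul_left (((k : ℝ) + 1) * k))) using 1
      · funext x
        simp only [Function.comp, etw, ets]
        push_cast
        ring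
      · push_cast
        ring

/-- Tuples graded by weighted size. -/
def tupleMap (k : ℕ) (x : Σ m : ℕ, {f // f ∈ orderkTuples k m}) : Fin k → ℕ :=
  fun j => (x.2.1 j).1

lemma ts_tupleMap (k : ℕ) (x : Σ m : ℕ, {f // f ∈ orderkTuples k m}) :
    ts k (tupleMap k x) = x.1 := by
  obtain ⟨m, f, hf⟩ := x
  exact (Finset.mem_filter.mp hf).2

lemma tupleMap_bijective (k : ℕ) : Function.Bijective (tupleMap k) := by
  constructor
  · intro x y h
    have hm : x.1 = y.1 := by rw [← ts_tupleMap, h, ts_tupleMap]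
    obtain ⟨m, f, hf⟩ := x
    obtain ⟨m', g, hg⟩ := y
    obtain rfl : m = m' := hm
    have : f = g := by
      funext j
      exact Fin.ext (congrFun h j)
    subst this
    rfl
  · intro f
    have hle : ∀ j, f j < ts k f + 1 := by
      intro j
      have h1 : (j.1 + 1) * f j ≤ ts k f :=
        Finset.single_le_sum (f := fun j : Fin k => (j.1 + 1) * f j)
          (fun _ _ => Nat.zero_le _) (Finset.mem_univ j)
      nlinarith
    exact ⟨⟨ts k f, fun j => ⟨f j, hle j⟩, Finset.mem_filter.mpr ⟨Finset.mem_univ _, rfl⟩⟩, rfl⟩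

/-- The second factorial moment of the Poisson distribution of order `k` is
`M_{(2)}(k,λ) = (k(k+1)/2)² λ² + ((k−1)k(k+1)/3) λ`. -/
theorem poissonOrderK_secondFactorialMoment (k : ℕ) (hk : 1 ≤ k) (lam : ℝ) (hlam : 0 < lam) :
    HasSum (fun m : ℕ => (m.descFactorial 2 : ℝ) * poissonOrderK k lam m)
      (((k : ℝ) * (k + 1) / 2) ^ 2 * lam ^ 2 + ((k : ℝ) - 1) * k * (k + 1) / 3 * lam) := by
  have h := (tuple_moments lam hlam k).2.2
  rw [← (Equiv.ofBijective _ (tupleMap_bijective k)).hasSum_iff] at h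
  have h' := (h.sigma (g := fun m : ℕ => (m : ℝ) * ((m : ℝ) - 1) *
    ∑ f ∈ orderkTuples k m, ∏ j : Fin k, lam ^ (f j).1 / (f j).1.factorial) ?_).mul_left
      (Real.exp (-(k * lam)))
  · convert h' using 1
    · rfl
    · funext m
      rw [poissonOrderK, Nat.cast_descFactorial_two]
      ring
    · rw [mul_left_comm, ← Real.exp_add]
      simp
  · intro m
    rw [Finset.mul_sum, ← Finset.sum_coe_sort]
    convert hasSum_fintype _ using 1
    refine Finset.sum_congr rfl fun f _ => ?_
    simp only [Function.comp, Equiv.ofBijective_apply, ts_tupleMap]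
    rfl
end

section
/- For every integer k ≥ 1 and every real λ > 0, the third factorial moment of the Poisson distribution of order k is M_{(3)}(k,λ) = κ₁³ λ³ + 6 κ₁ κ₂ λ² + 6 κ₃ λ, where κ_j = C(k+1, j+1); equivalently M_{(3)}(k,λ) = (k(k+1)/2)³ λ³ + 2 (k(k+1)/2)² (k−1) λ² + ((k−2)(k−1)k(k+1)/4) λ. -/
open scoped BigOperators

/-- the weighted sum of a tuple -/
def tupS {k : ℕ} (f : Fin k → ℕ) : ℕ := ∑ j : Fin k, (j.1 + 1) * f j

/-- the weight of a tuple -/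
noncomputable def tupW (lam : ℝ) {k : ℕ} (f : Fin k → ℕ) : ℝ :=
  ∏ j : Fin k, lam ^ (f j) / (f j).factorial

/-- tuples of weight `m` versus the frozen finite set -/
def fibEquiv (k m : ℕ) : {f : Fin k → ℕ // tupS f = m} ≃ {g // g ∈ orderkTuples k m} where
  toFun f := ⟨fun j => ⟨f.1 j, by
    have h := f.2
    have h2 : (j.1 + 1) * f.1 j ≤ tupS f.1 :=
      Finset.single_le_sum (f := fun j : Fin k => (j.1 + 1) * f.1 j)
        (fun _ _ => Nat.zero_le _) (Finset.mem_univ j)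
    nlinarith [Nat.zero_le (j.1 * f.1 j)]⟩, by
    simpa [orderkTuples, tupS] using f.2⟩
  invFun g := ⟨fun j => (g.1 j).1, by
    simpa [orderkTuples, tupS] using g.2⟩
  left_inv f := by ext; rfl
  right_inv g := by ext; rfl

lemma hasSum_conv {α : Type*} {f g : α → ℝ} {s t : ℝ} (h : HasSum f s)
    (hfg : ∀ a, g a = f a) (hst : t = s) : HasSum g t := by
  have : g = f := funext hfg
  rw [this, hst]; exact h

lemma hasSum_fib (k : ℕ) (lam : ℝ) (F : ℕ → ℝ) (s : ℝ)
    (h : HasSum (fun f : Fin k → ℕ => F (tupS f) * tupW lam f) s) :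
    HasSum (fun m : ℕ => F m *
      ∑ f ∈ orderkTuples k m, ∏ j : Fin k, lam ^ (f j).1 / (f j).1.factorial) s := by
  have h1 := (Equiv.hasSum_iff (Equiv.sigmaFiberEquiv (tupS (k := k)))).2 h
  refine h1.sigma (fun m => ?_)
  have h2 := (Finset.hasSum (orderkTuples k m)
    (fun f => ∏ j : Fin k, lam ^ (f j).1 / ((f j).1.factorial : ℝ))).mul_left (F m)
  have h3 := (Equiv.hasSum_iff (fibEquiv k m)).2 h2
  refine hasSum_conv h3 (fun f => ?_) rfl
  have hf := f.2
  simp only [Function.comp, Equiv.sigmaFiberEquiv, Equiv.coe_fn_mk, tupW, fibEquiv]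
  rw [hf]

lemma pois_step (lam : ℝ) (g : ℕ → ℝ) (s : ℝ)
    (h : HasSum (fun n : ℕ => g (n + 1) * (lam ^ n / n.factorial)) s) :
    HasSum (fun n : ℕ => (n : ℝ) * g n * (lam ^ n / n.factorial)) (lam * s) := by
  rw [← hasSum_nat_add_iff' 1]
  have e1 : lam * s - ∑ i ∈ Finset.range 1, (i : ℝ) * g i * (lam ^ i / (i.factorial : ℝ))
      = lam * s := by simp
  have e2 : (fun n : ℕ => ((n + 1 : ℕ) : ℝ) * g (n + 1) *
      (lam ^ (n + 1) / ((n + 1).factorial : ℝ))) =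
      fun n : ℕ => lam * (g (n + 1) * (lam ^ n / n.factorial)) := by
    funext n
    have : ((n + 1 : ℕ) : ℝ) ≠ 0 := by positivity
    have h2 : (n.factorial : ℝ) ≠ 0 := by positivity
    rw [Nat.factorial_succ]
    push_cast at this ⊢
    field_simp
    ring
  rw [e1, e2]
  exact h.mul_left lam

lemma pois0 (lam : ℝ) : HasSum (fun n : ℕ => (lam ^ n / n.factorial)) (Real.exp lam) := by
  rw [Real.exp_eq_exp_ℝ]
  exact NormedSpace.expSeries_div_hasSum_exp lam

lemma pois1 (lam : ℝ) :
    HasSum (fun n : ℕ => (n : ℝ) * (lam ^ n / n.factorial)) (Real.exp lam * lam) := by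
  have := pois_step lam (fun _ => 1) _ (by simpa using pois0 lam)
  convert this using 1
  · simp
  · ring

lemma pois2 (lam : ℝ) :
    HasSum (fun n : ℕ => (n : ℝ) ^ 2 * (lam ^ n / n.factorial))
      (Real.exp lam * (lam ^ 2 + lam)) := by
  have h := pois_step lam (fun n => n) (Real.exp lam * lam + Real.exp lam) (by
    convert (pois1 lam).add (pois0 lam) using 1
    funext n; push_cast; ring)
  convert h using 1
  · funext n; ring
  · ring

lemma pois3 (lam : ℝ) :
    HasSum (fun n : ℕ => (n : ℝ) ^ 3 * (lam ^ n / n.factorial))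
      (Real.exp lam * (lam ^ 3 + 3 * lam ^ 2 + lam)) := by
  have h := pois_step lam (fun n => (n : ℝ) ^ 2) _ (by
    convert ((pois2 lam).add ((pois1 lam).mul_left 2)).add (pois0 lam) using 1
    funext n; push_cast; ring)
  convert h using 1
  · funext n; ring
  · ring

lemma tupW_nonneg (lam : ℝ) (hlam : 0 < lam) {k : ℕ} (f : Fin k → ℕ) : 0 ≤ tupW lam f :=
  Finset.prod_nonneg (fun _ _ => by positivity)

lemma hasSum_mul' {α β : Type*} (f : α → ℝ) (g : β → ℝ) (s t : ℝ) (hf : HasSum f s)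
    (hg : HasSum g t) (hf0 : ∀ a, 0 ≤ f a) (hg0 : ∀ b, 0 ≤ g b) :
    HasSum (fun p : α × β => f p.1 * g p.2) (s * t) :=
  hf.mul hg (hf.summable.mul_of_nonneg hg.summable hf0 hg0)

/-- last-coordinate decomposition -/
def lastEquiv (k : ℕ) : ((Fin k → ℕ) × ℕ) ≃ (Fin (k + 1) → ℕ) where
  toFun p := Fin.snoc (α := fun _ => ℕ) p.1 p.2
  invFun f := (fun j => f j.castSucc, f (Fin.last k))
  left_inv p := by ext <;> simp
  right_inv f := by
    funext j
    refine Fin.lastCases ?_ (fun i => ?_) j <;> simp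

lemma tupS_last (k : ℕ) (p : (Fin k → ℕ) × ℕ) :
    tupS (lastEquiv k p) = tupS p.1 + (k + 1) * p.2 := by
  simp [tupS, lastEquiv, Fin.sum_univ_castSucc]

lemma tupW_last (lam : ℝ) (k : ℕ) (p : (Fin k → ℕ) × ℕ) :
    tupW lam (lastEquiv k p) = tupW lam p.1 * (lam ^ p.2 / p.2.factorial) := by
  simp only [tupW, lastEquiv, Fin.prod_univ_castSucc, Equiv.coe_fn_mk, Fin.snoc_castSucc,
    Fin.snoc_last]

/-- power moments of the weighted sum -/
lemma moments (lam : ℝ) (hlam : 0 < lam) (k : ℕ) :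
    HasSum (fun f : Fin k → ℕ => tupW lam f) (Real.exp (k * lam)) ∧
    HasSum (fun f : Fin k → ℕ => (tupS f : ℝ) * tupW lam f)
      (Real.exp (k * lam) * (lam * (k * (k + 1) / 2))) ∧
    HasSum (fun f : Fin k → ℕ => (tupS f : ℝ) ^ 2 * tupW lam f)
      (Real.exp (k * lam) * (lam * (k * (k + 1) * (2 * k + 1) / 6)
        + (lam * (k * (k + 1) / 2)) ^ 2)) ∧
    HasSum (fun f : Fin k → ℕ => (tupS f : ℝ) ^ 3 * tupW lam f)
      (Real.exp (k * lam) * (lam * (k * (k + 1) / 2) ^ 2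
        + 3 * (lam * (k * (k + 1) / 2)) * (lam * (k * (k + 1) * (2 * k + 1) / 6))
        + (lam * (k * (k + 1) / 2)) ^ 3)) := by
  induction k with
  | zero =>
    have key : ∀ F : (Fin 0 → ℕ) → ℝ, HasSum F (F (fun _ => 0)) := fun F => by
      convert hasSum_unique F
    refine ⟨?_, ?_, ?_, ?_⟩ <;> (convert key _ using 1; simp [tupS, tupW])
  | succ k ih =>
    obtain ⟨h0, h1, h2, h3⟩ := ih
    have hw := fun f : Fin k → ℕ => tupW_nonneg lam hlam f
    have pw : ∀ n : ℕ, 0 ≤ lam ^ n / (n.factorial : ℝ) := fun n => by positivity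
    have hw1 : ∀ f : Fin k → ℕ, 0 ≤ (tupS f : ℝ) * tupW lam f :=
      fun f => mul_nonneg (by positivity) (hw f)
    have hw2 : ∀ f : Fin k → ℕ, 0 ≤ (tupS f : ℝ) ^ 2 * tupW lam f :=
      fun f => mul_nonneg (by positivity) (hw f)
    have hw3 : ∀ f : Fin k → ℕ, 0 ≤ (tupS f : ℝ) ^ 3 * tupW lam f :=
      fun f => mul_nonneg (by positivity) (hw f)
    have p0 := pois0 lam
    have p1 := pois1 lam
    have p2 := pois2 lam
    have p3 := pois3 lam
    have pw1 : ∀ n : ℕ, 0 ≤ (n : ℝ) * (lam ^ n / (n.factorial : ℝ)) := fun n => by positivity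
    have pw2 : ∀ n : ℕ, 0 ≤ (n : ℝ) ^ 2 * (lam ^ n / (n.factorial : ℝ)) :=
      fun n => by positivity
    have pw3 : ∀ n : ℕ, 0 ≤ (n : ℝ) ^ 3 * (lam ^ n / (n.factorial : ℝ)) :=
      fun n => by positivity
    have a00 := hasSum_mul' _ _ _ _ h0 p0 hw pw
    have a01 := hasSum_mul' _ _ _ _ h0 p1 hw pw1
    have a02 := hasSum_mul' _ _ _ _ h0 p2 hw pw2
    have a03 := hasSum_mul' _ _ _ _ h0 p3 hw pw3
    have a10 := hasSum_mul' _ _ _ _ h1 p0 hw1 pw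
    have a11 := hasSum_mul' _ _ _ _ h1 p1 hw1 pw1
    have a12 := hasSum_mul' _ _ _ _ h1 p2 hw1 pw2
    have a20 := hasSum_mul' _ _ _ _ h2 p0 hw2 pw
    have a21 := hasSum_mul' _ _ _ _ h2 p1 hw2 pw1
    have a30 := hasSum_mul' _ _ _ _ h3 p0 hw3 pw
    have he : Real.exp (((k + 1 : ℕ) : ℝ) * lam) = Real.exp (k * lam) * Real.exp lam := by
      rw [← Real.exp_add]; congr 1; push_cast; ring
    rw [he]
    refine ⟨?_, ?_, ?_, ?_⟩
    · rw [← Equiv.hasSum_iff (lastEquiv k)]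
      convert a00 using 1
      funext p
      simp only [Function.comp, tupW_last]
    · rw [← Equiv.hasSum_iff (lastEquiv k)]
      convert a10.add (a01.mul_left ((k : ℝ) + 1)) using 1
      · funext p
        simp only [Function.comp, tupW_last, tupS_last]
        push_cast; ring
      · push_cast; ring
    · rw [← Equiv.hasSum_iff (lastEquiv k)]
      convert (a20.add (a11.mul_left (2 * ((k : ℝ) + 1)))).add
        (a02.mul_left (((k : ℝ) + 1) ^ 2)) using 1
      · funext p
        simp only [Function.comp, tupW_last, tupS_last]
        push_cast; ring
      · push_cast; ring
    · rw [← Equiv.hasSum_iff (lastEquiv k)]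
      convert ((a30.add (a21.mul_left (3 * ((k : ℝ) + 1)))).add
        (a12.mul_left (3 * ((k : ℝ) + 1) ^ 2))).add
        (a03.mul_left (((k : ℝ) + 1) ^ 3)) using 1
      · funext p
        simp only [Function.comp, tupW_last, tupS_last]
        push_cast; ring
      · push_cast; ring

lemma desc3 (n : ℕ) : (n.descFactorial 3 : ℝ) = (n : ℝ) ^ 3 - 3 * (n : ℝ) ^ 2 + 2 * n := by
  rcases n with _ | _ | n
  · simp [Nat.descFactorial]
  · simp [Nat.descFactorial]; norm_num
  · simp [Nat.descFactorial]; ring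

lemma kappa1 (k : ℕ) : kappa k 1 = (k : ℝ) * (k + 1) / 2 := by
  unfold kappa
  rw [Nat.cast_choose_two]; push_cast; ring

lemma kappa2 (k : ℕ) : kappa k 2 = ((k : ℝ) - 1) * k * (k + 1) / 6 := by
  induction k with
  | zero => simp [kappa, Nat.choose]
  | succ k ih =>
    have h1 := kappa1 k
    unfold kappa at *
    rw [Nat.choose_succ_succ, Nat.cast_add, ih, h1]; push_cast; ring

lemma kappa3 (k : ℕ) : kappa k 3 = ((k : ℝ) - 2) * (k - 1) * k * (k + 1) / 24 := by
  induction k with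
  | zero => simp [kappa, Nat.choose]
  | succ k ih =>
    have h1 := kappa2 k
    unfold kappa at *
    rw [Nat.choose_succ_succ, Nat.cast_add, ih, h1]; push_cast; ring


/-- The third factorial moment of the Poisson distribution of order `k` is
`M_{(3)}(k,λ) = κ₁³λ³ + 6κ₁κ₂λ² + 6κ₃λ`, equivalently
`(k(k+1)/2)³λ³ + 2(k(k+1)/2)²(k−1)λ² + ((k−2)(k−1)k(k+1)/4)λ`. -/
theorem poissonOrderK_thirdFactorialMoment (k : ℕ) (hk : 1 ≤ k) (lam : ℝ) (hlam : 0 < lam) :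
    HasSum (fun m : ℕ => (m.descFactorial 3 : ℝ) * poissonOrderK k lam m)
      (kappa k 1 ^ 3 * lam ^ 3 + 6 * kappa k 1 * kappa k 2 * lam ^ 2 + 6 * kappa k 3 * lam) ∧
    kappa k 1 ^ 3 * lam ^ 3 + 6 * kappa k 1 * kappa k 2 * lam ^ 2 + 6 * kappa k 3 * lam
      = ((k : ℝ) * (k + 1) / 2) ^ 3 * lam ^ 3
        + 2 * ((k : ℝ) * (k + 1) / 2) ^ 2 * ((k : ℝ) - 1) * lam ^ 2
        + ((k : ℝ) - 2) * ((k : ℝ) - 1) * k * (k + 1) / 4 * lam := by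
  constructor
  · obtain ⟨h0, h1, h2, h3⟩ := moments lam hlam k
    have h4 := (h3.sub (h2.mul_left 3)).add (h1.mul_left 2)
    have h5 := hasSum_fib k lam (fun m => (m.descFactorial 3 : ℝ)) _ (by
      refine hasSum_conv h4 (fun f => ?_) rfl
      rw [desc3]; ring)
    have h6 := h5.mul_left (Real.exp (-(k * lam)))
    have he : Real.exp (-(k * lam)) * Real.exp (k * lam) = 1 := by
      rw [← Real.exp_add]; simp
    refine hasSum_conv h6 (fun m => ?_) ?_
    · unfold poissonOrderK
      ring
    · rw [kappa1, kappa2, kappa3]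
      linear_combination (-((lam * (k * (k + 1) / 2) ^ 2
        + 3 * (lam * (k * (k + 1) / 2)) * (lam * (k * (k + 1) * (2 * k + 1) / 6))
        + (lam * (k * (k + 1) / 2)) ^ 3) - 3 * (lam * (k * (k + 1) * (2 * k + 1) / 6)
        + (lam * (k * (k + 1) / 2)) ^ 2) + 2 * (lam * (k * (k + 1) / 2)))) * he
  · rw [kappa1, kappa2, kappa3]; ring
end

section
/- For every integer k ≥ 1 and every real λ > 0, the fourth factorial moment of the Poisson distribution of order k is M_{(4)}(k,λ) = κ₁⁴ λ⁴ + 12 κ₁² κ₂ λ³ + (12 κ₂² + 24 κ₁ κ₃) λ² + 24 κ₄ λ, where κ_j = C(k+1, j+1). -/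
open scoped BigOperators

lemma pk_congr {α : Type} {f g : α → ℝ} {a b : ℝ} (h : HasSum f a) (hf : g = f) (hb : b = a) :
    HasSum g b := by
  subst hf; subst hb; exact h

lemma pk_desc_cast (n : ℕ) :
    ((n.descFactorial 0 : ℕ) : ℝ) = 1 ∧ ((n.descFactorial 1 : ℕ) : ℝ) = n ∧
    ((n.descFactorial 2 : ℕ) : ℝ) = n * (n - 1) ∧
    ((n.descFactorial 3 : ℕ) : ℝ) = n * (n - 1) * (n - 2) ∧
    ((n.descFactorial 4 : ℕ) : ℝ) = n * (n - 1) * (n - 2) * (n - 3) := by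
  rcases n with _ | _ | _ | _ | n <;>
    simp [Nat.descFactorial] <;> norm_num
  refine ⟨?_, ?_, ?_⟩ <;> ring

/-- The values of the first four factorial moments, in terms of the factorial cumulants. -/
noncomputable def pkF (l b1 b2 b3 b4 : ℝ) : ℕ → ℝ
  | 0 => 1
  | 1 => l * b1
  | 2 => l ^ 2 * b1 ^ 2 + 2 * l * b2
  | 3 => l ^ 3 * b1 ^ 3 + 6 * l ^ 2 * b1 * b2 + 6 * l * b3
  | _ => b1 ^ 4 * l ^ 4 + 12 * b1 ^ 2 * b2 * l ^ 3
        + (12 * b2 ^ 2 + 24 * b1 * b3) * l ^ 2 + 24 * b4 * l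

/-- Factorial moments of `S` under the weight `w`. -/
def pkMom {ι : Type} (w : ι → ℝ) (S : ι → ℕ) (l b1 b2 b3 b4 : ℝ) : Prop :=
  ∀ i ≤ 4, HasSum (fun x => ((S x).descFactorial i : ℝ) * w x) (pkF l b1 b2 b3 b4 i)

noncomputable def pkW (l : ℝ) (n : ℕ) : ℝ := Real.exp (-l) * (l ^ n / n.factorial)

lemma pkW_mom (l : ℝ) (i : ℕ) :
    HasSum (fun n : ℕ => (n.descFactorial i : ℝ) * pkW l n) (l ^ i) := by
  induction i with
  | zero =>
    have h := (NormedSpace.expSeries_div_hasSum_exp (𝔸 := ℝ) l).mul_left (Real.exp (-l))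
    rw [← Real.exp_eq_exp_ℝ, ← Real.exp_add] at h
    simpa [pkW] using h
  | succ i ih =>
    rw [← hasSum_nat_add_iff' 1]
    have h := ih.mul_left l
    refine pk_congr h ?_ ?_
    · funext n
      rw [Nat.succ_descFactorial_succ, pkW, pkW, Nat.factorial_succ]
      have : ((n.factorial : ℕ) : ℝ) ≠ 0 := by positivity
      push_cast
      field_simp
      ring
    · simp [pow_succ, mul_comm]

lemma pkW_mul_mom (l : ℝ) (a : ℕ) :
    pkMom (pkW l) (fun n => a * n) l (a.choose 1) (a.choose 2) (a.choose 3) (a.choose 4) := by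
  have e : ∀ j, ((a.choose j : ℕ) : ℝ) = (a.descFactorial j : ℝ) / (j.factorial : ℝ) := by
    intro j
    rw [Nat.descFactorial_eq_factorial_mul_choose]
    have : ((j.factorial : ℕ) : ℝ) ≠ 0 := by positivity
    push_cast
    field_simp
  obtain ⟨a0, a1, a2, a3, a4⟩ := pk_desc_cast a
  have c1 : ((a.choose 1 : ℕ) : ℝ) = a := by simp
  have c2 : ((a.choose 2 : ℕ) : ℝ) = a * (a - 1) / 2 := by rw [e, a2]; norm_num [Nat.factorial]
  have c3 : ((a.choose 3 : ℕ) : ℝ) = a * (a - 1) * (a - 2) / 6 := by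
    rw [e, a3]; norm_num [Nat.factorial]
  have c4 : ((a.choose 4 : ℕ) : ℝ) = a * (a - 1) * (a - 2) * (a - 3) / 24 := by
    rw [e, a4]; norm_num [Nat.factorial]
  rw [c1, c2, c3, c4]
  set A : ℝ := (a : ℝ)
  -- general combination
  have key : ∀ i, ∀ d0 d1 d2 d3 d4 : ℝ,
      (∀ n : ℕ, (((a * n).descFactorial i : ℕ) : ℝ) =
        d0 * n.descFactorial 0 + d1 * n.descFactorial 1 + d2 * n.descFactorial 2
         + d3 * n.descFactorial 3 + d4 * n.descFactorial 4) →
      HasSum (fun n : ℕ => ((a * n).descFactorial i : ℝ) * pkW l n)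
        (d0 * l ^ 0 + d1 * l ^ 1 + d2 * l ^ 2 + d3 * l ^ 3 + d4 * l ^ 4) := by
    intro i d0 d1 d2 d3 d4 h
    refine pk_congr ((((((pkW_mom l 0).mul_left d0).add ((pkW_mom l 1).mul_left d1)).add
      ((pkW_mom l 2).mul_left d2)).add ((pkW_mom l 3).mul_left d3)).add
      ((pkW_mom l 4).mul_left d4)) ?_ rfl
    funext n
    rw [h]; ring
  intro i hi
  interval_cases i
  · convert key 0 1 0 0 0 0 ?_ using 1
    · simp [pkF]
    · intro n; simp
  · convert key 1 0 A 0 0 0 ?_ using 1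
    · simp [pkF]; ring
    · intro n; simp [A]
  · convert key 2 0 (A * (A - 1)) (A ^ 2) 0 0 ?_ using 1
    · simp only [pkF]; ring
    · intro n
      obtain ⟨n0, n1, n2, n3, n4⟩ := pk_desc_cast n
      obtain ⟨m0, m1, m2, m3, m4⟩ := pk_desc_cast (a * n)
      rw [m2, n0, n1, n2, n3, n4]; push_cast; ring
  · convert key 3 0 (A * (A - 1) * (A - 2)) (3 * A ^ 2 * (A - 1)) (A ^ 3) 0 ?_ using 1
    · simp only [pkF]; ring
    · intro n
      obtain ⟨n0, n1, n2, n3, n4⟩ := pk_desc_cast n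
      obtain ⟨m0, m1, m2, m3, m4⟩ := pk_desc_cast (a * n)
      rw [m3, n0, n1, n2, n3, n4]; push_cast; ring
  · convert key 4 0 (A * (A - 1) * (A - 2) * (A - 3))
      (3 * A ^ 2 * (A - 1) ^ 2 + 4 * A ^ 2 * (A - 1) * (A - 2)) (6 * A ^ 3 * (A - 1))
      (A ^ 4) ?_ using 1
    · simp only [pkF]; ring
    · intro n
      obtain ⟨n0, n1, n2, n3, n4⟩ := pk_desc_cast n
      obtain ⟨m0, m1, m2, m3, m4⟩ := pk_desc_cast (a * n)
      rw [m4, n0, n1, n2, n3, n4]; push_cast; ring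

lemma pkMom_prod {ι κ : Type} {w : ι → ℝ} {S : ι → ℕ} {v : κ → ℝ} {T : κ → ℕ}
    {l b1 b2 b3 b4 c1 c2 c3 c4 : ℝ} (hw : ∀ x, 0 ≤ w x) (hv : ∀ x, 0 ≤ v x)
    (h : pkMom w S l b1 b2 b3 b4) (h' : pkMom v T l c1 c2 c3 c4) :
    pkMom (fun p : ι × κ => w p.1 * v p.2) (fun p => S p.1 + T p.2) l
      (b1 + c1) (b2 + c2) (b3 + c3) (b4 + c4) := by
  have key : ∀ i ≤ 4, ∀ j ≤ 4, HasSum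
      (fun p : ι × κ => (((S p.1).descFactorial i : ℝ) * w p.1) *
        (((T p.2).descFactorial j : ℝ) * v p.2))
      (pkF l b1 b2 b3 b4 i * pkF l c1 c2 c3 c4 j) := by
    intro i hi j hj
    refine (h i hi).mul (h' j hj) ?_
    exact (h i hi).summable.mul_of_nonneg (h' j hj).summable
      (fun x => mul_nonneg (by positivity) (hw x)) (fun x => mul_nonneg (by positivity) (hv x))
  intro i hi
  interval_cases i
  · convert key 0 (by norm_num) 0 (by norm_num) using 1
    · funext p; simp
    · simp [pkF]
  · convert (key 0 (by norm_num) 1 (by norm_num)).add (key 1 (by norm_num) 0 (by norm_num)) using 1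
    · funext p; simp; ring
    · simp [pkF]; ring
  · convert ((key 0 (by norm_num) 2 (by norm_num)).add
      ((key 1 (by norm_num) 1 (by norm_num)).mul_left 2)).add
      (key 2 (by norm_num) 0 (by norm_num)) using 1
    · funext p
      obtain ⟨n0, n1, n2, n3, n4⟩ := pk_desc_cast (S p.1)
      obtain ⟨m0, m1, m2, m3, m4⟩ := pk_desc_cast (T p.2)
      obtain ⟨q0, q1, q2, q3, q4⟩ := pk_desc_cast (S p.1 + T p.2)
      simp only [n0, n1, n2, m0, m1, m2, q2]; push_cast; ring
    · simp only [pkF]; ring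
  · convert (((key 0 (by norm_num) 3 (by norm_num)).add
      ((key 1 (by norm_num) 2 (by norm_num)).mul_left 3)).add
      ((key 2 (by norm_num) 1 (by norm_num)).mul_left 3)).add
      (key 3 (by norm_num) 0 (by norm_num)) using 1
    · funext p
      obtain ⟨n0, n1, n2, n3, n4⟩ := pk_desc_cast (S p.1)
      obtain ⟨m0, m1, m2, m3, m4⟩ := pk_desc_cast (T p.2)
      obtain ⟨q0, q1, q2, q3, q4⟩ := pk_desc_cast (S p.1 + T p.2)
      simp only [n0, n1, n2, n3, m0, m1, m2, m3, q3]; push_cast; ring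
    · simp only [pkF]; ring
  · convert ((((key 0 (by norm_num) 4 (by norm_num)).add
      ((key 1 (by norm_num) 3 (by norm_num)).mul_left 4)).add
      ((key 2 (by norm_num) 2 (by norm_num)).mul_left 6)).add
      ((key 3 (by norm_num) 1 (by norm_num)).mul_left 4)).add
      (key 4 (by norm_num) 0 (by norm_num)) using 1
    · funext p
      obtain ⟨n0, n1, n2, n3, n4⟩ := pk_desc_cast (S p.1)
      obtain ⟨m0, m1, m2, m3, m4⟩ := pk_desc_cast (T p.2)
      obtain ⟨q0, q1, q2, q3, q4⟩ := pk_desc_cast (S p.1 + T p.2)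
      simp only [n0, n1, n2, n3, n4, m0, m1, m2, m3, m4, q4]; push_cast; ring
    · simp only [pkF]; ring

lemma pkW_nonneg {l : ℝ} (hl : 0 < l) (n : ℕ) : 0 ≤ pkW l n := by
  unfold pkW; positivity

lemma pkMom_tuples (k : ℕ) {l : ℝ} (hl : 0 < l) :
    pkMom (fun f : Fin k → ℕ => ∏ j, pkW l (f j)) (fun f => ∑ j : Fin k, (j.1 + 1) * f j) l
      (kappa k 1) (kappa k 2) (kappa k 3) (kappa k 4) := by
  induction k with
  | zero =>
    intro i hi
    have h := hasSum_fintype (fun x : Fin 0 → ℕ =>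
      (((∑ j : Fin 0, (j.1 + 1) * x j).descFactorial i : ℕ) : ℝ) * ∏ j, pkW l (x j))
    refine pk_congr h rfl ?_
    interval_cases i <;> simp [pkF, kappa, Nat.choose]
  | succ k ih =>
    have h := pkMom_prod (pkW_nonneg hl)
      (fun f => Finset.prod_nonneg fun j _ => pkW_nonneg hl (f j)) (pkW_mul_mom l (k + 1)) ih
    have hk : ∀ j, kappa (k + 1) j = ((k + 1).choose j : ℝ) + kappa k j := by
      intro j; unfold kappa; rw [Nat.choose_succ_succ (k + 1) j]; push_cast; ring
    intro i hi
    rw [hk 1, hk 2, hk 3, hk 4, ← (Fin.snocEquiv (fun _ : Fin (k + 1) => ℕ)).hasSum_iff]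
    refine pk_congr (h i hi) ?_ rfl
    funext p
    simp [Fin.snocEquiv, Fin.sum_univ_castSucc, Fin.prod_univ_castSucc, add_comm, mul_comm]

def pkEquiv (k m : ℕ) : {f // f ∈ orderkTuples k m} ≃
    {n : Fin k → ℕ // ∑ j : Fin k, (j.1 + 1) * n j = m} where
  toFun f := ⟨fun j => (f.1 j).1, by
    have := f.2
    simpa [orderkTuples] using this⟩
  invFun n := ⟨fun j => ⟨n.1 j, by
    have h := n.2
    have h1 : (j.1 + 1) * n.1 j ≤ ∑ j : Fin k, (j.1 + 1) * n.1 j :=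
      Finset.single_le_sum (f := fun j : Fin k => (j.1 + 1) * n.1 j)
        (fun _ _ => Nat.zero_le _) (Finset.mem_univ j)
    nlinarith [Nat.zero_le (j.1 * n.1 j)]⟩, by
    have h := n.2
    simpa [orderkTuples] using h⟩
  left_inv f := by ext; rfl
  right_inv n := by ext; rfl

/-- The fourth factorial moment of the Poisson distribution of order `k` is
`M_{(4)}(k,λ) = κ₁⁴λ⁴ + 12κ₁²κ₂λ³ + (12κ₂² + 24κ₁κ₃)λ² + 24κ₄λ`. -/
theorem poissonOrderK_fourthFactorialMoment (k : ℕ) (hk : 1 ≤ k) (lam : ℝ) (hlam : 0 < lam) :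
    HasSum (fun m : ℕ => (m.descFactorial 4 : ℝ) * poissonOrderK k lam m)
      (kappa k 1 ^ 4 * lam ^ 4 + 12 * kappa k 1 ^ 2 * kappa k 2 * lam ^ 3
        + (12 * kappa k 2 ^ 2 + 24 * kappa k 1 * kappa k 3) * lam ^ 2
        + 24 * kappa k 4 * lam) := by
  have h := pkMom_tuples k hlam 4 le_rfl
  rw [← (Equiv.sigmaFiberEquiv
    (fun n : Fin k → ℕ => ∑ j : Fin k, (j.1 + 1) * n j)).hasSum_iff] at h
  refine HasSum.sigma h ?_
  intro m
  rw [← (pkEquiv k m).hasSum_iff]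
  have h2 := (orderkTuples k m).hasSum (fun f => (m.descFactorial 4 : ℝ) *
    (Real.exp (-(k * lam)) * ∏ j : Fin k, lam ^ (f j).1 / (f j).1.factorial))
  rw [← Finset.mul_sum, ← Finset.mul_sum] at h2
  refine pk_congr h2 ?_ rfl
  funext f
  have hf : ∑ j : Fin k, (j.1 + 1) * (f.1 j).1 = m := ((pkEquiv k m) f).2
  have he : Real.exp (-(k * lam)) = ∏ _j : Fin k, Real.exp (-lam) := by
    rw [Finset.prod_const, ← Real.exp_nat_mul]; simp
  simp only [Function.comp, Equiv.sigmaFiberEquiv, pkEquiv, Equiv.coe_fn_mk, pkW,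
    Finset.prod_mul_distrib, he]
  simp [hf]
end

section
/- For every integer k ≥ 1 and every real λ > 0, the fifth factorial moment of the Poisson distribution of order k is M_{(5)}(k,λ) = κ₁⁵ λ⁵ + 20 κ₁³ κ₂ λ⁴ + (60 κ₁ κ₂² + 60 κ₁² κ₃) λ³ + (120 κ₁ κ₄ + 120 κ₂ κ₃) λ² + 120 κ₅ λ, where κ_j = C(k+1, j+1). -/
open scoped BigOperators

lemma aux_step (c : ℕ → ℝ) (e : ℕ → ℕ) (G G' : ℝ → ℝ)
    (h : ∀ t, HasSum (fun m => c m * t ^ e m) (G t)) (hG : ∀ t, HasDerivAt G (G' t) t) (t : ℝ) :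
    HasSum (fun m => c m * e m * t ^ (e m - 1)) (G' t) := by
  set R : ℝ := |t| + 1 with hR
  have hR1 : 1 ≤ R := by have := abs_nonneg t; linarith
  have hu : Summable (fun m => ‖c m * (2 * R) ^ e m‖) := (h (2 * R)).summable.norm
  have hb : ∀ m, ∀ y ∈ Metric.ball (0 : ℝ) R,
      ‖c m * (e m * y ^ (e m - 1))‖ ≤ ‖c m * (2 * R) ^ e m‖ := by
    intro m y hy
    have hy' : |y| ≤ R := by
      have := mem_ball_zero_iff.1 hy
      rw [Real.norm_eq_abs] at this
      exact this.le
    rw [norm_mul, norm_mul, norm_mul, mul_pow, norm_mul, norm_pow, norm_pow, norm_pow]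
    simp only [Real.norm_eq_abs, Nat.abs_cast, Nat.abs_ofNat]
    rw [abs_of_nonneg (by linarith : 0 ≤ R)]
    have h1 : (e m : ℝ) ≤ 2 ^ e m := by exact_mod_cast (Nat.lt_two_pow_self).le
    have h2 : |y| ^ (e m - 1) ≤ R ^ e m :=
      (pow_le_pow_left₀ (abs_nonneg y) hy' _).trans (pow_le_pow_right₀ hR1 (Nat.sub_le _ _))
    gcongr
  have ht : t ∈ Metric.ball (0 : ℝ) R := by
    rw [mem_ball_zero_iff, Real.norm_eq_abs]; linarith
  have hd := hasDerivAt_tsum_of_isPreconnected (g := fun m y => c m * y ^ e m)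
    (g' := fun m y => c m * (e m * y ^ (e m - 1))) hu Metric.isOpen_ball
    (convex_ball (0 : ℝ) R).isPreconnected
    (fun m y _ => (hasDerivAt_pow (e m) y).const_mul (c m)) hb ht (h t).summable ht
  have hGe : (fun z => ∑' m, c m * z ^ e m) = G := funext fun z => (h z).tsum_eq
  rw [hGe] at hd
  have hs : Summable (fun m => c m * (e m * t ^ (e m - 1))) :=
    Summable.of_norm_bounded hu (fun m => hb m t ht)
  have := hs.hasSum
  rw [hd.unique (hG t)] at this
  simpa [mul_assoc] using this

lemma aux_prod (k : ℕ) : ∀ x : Fin k → ℝ,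
    HasSum (fun f : Fin k → ℕ => ∏ j, x j ^ f j / (f j).factorial) (Real.exp (∑ j, x j)) := by
  induction k with
  | zero => intro x; simpa using hasSum_unique (fun f : Fin 0 → ℕ => (1 : ℝ))
  | succ k ih =>
    intro x
    have h1 : ∀ y : ℝ, HasSum (fun n : ℕ => y ^ n / n.factorial) (Real.exp y) := fun y => by
      rw [Real.exp_eq_exp_ℝ]; exact NormedSpace.expSeries_div_hasSum_exp y
    have h2 := ih (fun j => x j.succ)
    have hs : Summable (fun p : ℕ × (Fin k → ℕ) => x 0 ^ p.1 / (p.1.factorial : ℝ) *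
        ∏ j : Fin k, x j.succ ^ p.2 j / ((p.2 j).factorial : ℝ)) := by
      apply summable_mul_of_summable_norm (f := fun n : ℕ => x 0 ^ n / (n.factorial : ℝ))
        (g := fun f : Fin k → ℕ => ∏ j : Fin k, x j.succ ^ f j / ((f j).factorial : ℝ))
      · exact (h1 (x 0)).summable.norm
      · exact h2.summable.norm
    have h3 := (h1 (x 0)).mul h2 hs
    rw [← (Fin.consEquiv (fun _ : Fin (k + 1) => ℕ)).hasSum_iff, Fin.sum_univ_succ, Real.exp_add]
    refine Eq.mp (congrArg (fun F => HasSum F _) (funext fun p => ?_)) h3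
    simp [Fin.prod_univ_succ, Fin.consEquiv]
    rw [div_mul_div_comm]

lemma aux_fiber (k m : ℕ) (g : (Fin k → ℕ) → ℝ) :
    HasSum (fun c : {f : Fin k → ℕ // ∑ j, (j.1 + 1) * f j = m} => g c)
      (∑ f ∈ orderkTuples k m, g (fun j => (f j).1)) := by
  have hlt : ∀ c : {f : Fin k → ℕ // ∑ j, (j.1 + 1) * f j = m}, ∀ j, c.1 j < m + 1 := by
    intro c j
    have h1 : (j.1 + 1) * c.1 j ≤ m :=
      (Finset.single_le_sum (f := fun j : Fin k => (j.1 + 1) * c.1 j)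
        (fun _ _ => Nat.zero_le _) (Finset.mem_univ j)).trans c.2.le
    nlinarith [Nat.zero_le (j.1 * c.1 j)]
  let E : {f : Fin k → ℕ // ∑ j, (j.1 + 1) * f j = m} ≃ {f // f ∈ orderkTuples k m} :=
    { toFun := fun c => ⟨fun j => ⟨c.1 j, hlt c j⟩, by simp [orderkTuples, c.2]⟩
      invFun := fun f => ⟨fun j => (f.1 j).1, by simpa [orderkTuples] using f.2⟩
      left_inv := fun c => rfl
      right_inv := fun f => rfl }
  exact (E.hasSum_iff (f := fun f : {f // f ∈ orderkTuples k m} => g (fun j => (f.1 j).1))).2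
    ((orderkTuples k m).hasSum (fun f => g (fun j => (f j).1)))

lemma aux_gf (k : ℕ) (lam t : ℝ) :
    HasSum (fun m => poissonOrderK k lam m * t ^ m)
      (Real.exp (-(k * lam)) * Real.exp (∑ j : Fin k, lam * t ^ (j.1 + 1))) := by
  have h := aux_prod k (fun j => lam * t ^ (j.1 + 1))
  rw [← (Equiv.sigmaFiberEquiv (fun f : Fin k → ℕ => ∑ j, (j.1 + 1) * f j)).hasSum_iff] at h
  have h2 := h.sigma (fun m => aux_fiber k m
    (fun f => ∏ j, (lam * t ^ (j.1 + 1)) ^ f j / (f j).factorial))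
  have h3 := h2.mul_left (Real.exp (-(k * lam)))
  refine Eq.mp (congrArg (fun F => HasSum F _) (funext fun m => ?_)) h3
  symm
  rw [poissonOrderK, mul_assoc, Finset.sum_mul]
  congr 1
  refine Finset.sum_congr rfl fun f hf => ?_
  have hf' : ∑ j : Fin k, (j.1 + 1) * (f j).1 = m := by simpa [orderkTuples] using hf
  have ht : t ^ m = ∏ j : Fin k, t ^ ((j.1 + 1) * (f j).1) := by
    rw [Finset.prod_pow_eq_pow_sum, hf']
  rw [ht, ← Finset.prod_mul_distrib]
  refine Finset.prod_congr rfl fun j _ => ?_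
  rw [mul_pow, ← pow_mul]; ring

lemma aux_choose (k i : ℕ) :
    ∑ j : Fin k, (j.1 + 1).choose (i + 1) = (k + 1).choose (i + 2) := by
  induction k with
  | zero => simp [Nat.choose_eq_zero_of_lt]
  | succ k ih =>
    rw [Fin.sum_univ_castSucc]
    simp only [Fin.val_castSucc, Fin.val_last]
    rw [ih, Nat.choose_succ_succ (k + 1) (i + 1), add_comm]

open Polynomial in
noncomputable def auxQ (k : ℕ) (lam : ℝ) : ℝ[X] := ∑ j : Fin k, C lam * X ^ (j.1 + 1)

open Polynomial in
noncomputable def auxP (q : ℝ[X]) : ℕ → ℝ[X]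
  | 0 => 1
  | n + 1 => derivative (auxP q n) + auxP q n * derivative q

open Polynomial in
lemma auxQ_eval (k : ℕ) (lam : ℝ) (i : ℕ) :
    (derivative^[i + 1] (auxQ k lam)).eval 1 = lam * (i + 1).factorial * kappa k (i + 1) := by
  rw [auxQ, iterate_derivative_sum, eval_finsetSum, kappa, ← aux_choose, Nat.cast_sum,
    Finset.mul_sum]
  refine Finset.sum_congr rfl fun j _ => ?_
  rw [iterate_derivative_C_mul, iterate_derivative_X_pow_eq_natCast_mul,
    Nat.descFactorial_eq_factorial_mul_choose]
  simp [mul_assoc]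

open Polynomial in
lemma aux_moment (k : ℕ) (lam : ℝ) (n : ℕ) : ∀ t : ℝ,
    HasSum (fun m : ℕ => (poissonOrderK k lam m * m.descFactorial n) * t ^ (m - n))
      (Real.exp (-(k * lam)) *
        ((auxP (auxQ k lam) n).eval t * Real.exp ((auxQ k lam).eval t))) := by
  induction n with
  | zero =>
    intro t
    simpa [auxP, auxQ, eval_finsetSum] using aux_gf k lam t
  | succ n ih =>
    intro t
    have h := aux_step _ (fun m => m - n) _ _ ih (fun t =>
      ((((auxP (auxQ k lam) n).hasDerivAt t).mul ((auxQ k lam).hasDerivAt t).exp).const_mul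
        (Real.exp (-(k * lam))))) t
    convert h using 1
    · funext m
      rw [Nat.descFactorial_succ, Nat.sub_sub]; push_cast; ring
    · simp [auxP]; ring

/-- The fifth factorial moment of the Poisson distribution of order `k` is
`M_{(5)}(k,λ) = κ₁⁵λ⁵ + 20κ₁³κ₂λ⁴ + (60κ₁κ₂² + 60κ₁²κ₃)λ³
  + (120κ₁κ₄ + 120κ₂κ₃)λ² + 120κ₅λ`. -/
theorem poissonOrderK_fifthFactorialMoment (k : ℕ) (hk : 1 ≤ k) (lam : ℝ) (hlam : 0 < lam) :
    HasSum (fun m : ℕ => (m.descFactorial 5 : ℝ) * poissonOrderK k lam m)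
      (kappa k 1 ^ 5 * lam ^ 5 + 20 * kappa k 1 ^ 3 * kappa k 2 * lam ^ 4
        + (60 * kappa k 1 * kappa k 2 ^ 2 + 60 * kappa k 1 ^ 2 * kappa k 3) * lam ^ 3
        + (120 * kappa k 1 * kappa k 4 + 120 * kappa k 2 * kappa k 3) * lam ^ 2
        + 120 * kappa k 5 * lam) := by
  have h := aux_moment k lam 5 1
  have e1 := auxQ_eval k lam 0
  have e2 := auxQ_eval k lam 1
  have e3 := auxQ_eval k lam 2
  have e4 := auxQ_eval k lam 3
  have e5 := auxQ_eval k lam 4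
  have e0 : (auxQ k lam).eval 1 = k * lam := by
    simp [auxQ, Polynomial.eval_finsetSum]
  rw [e0, mul_left_comm, ← Real.exp_add, neg_add_cancel, Real.exp_zero, mul_one] at h
  convert h using 1
  · funext m
    rw [one_pow, mul_one, mul_comm]
  · simp only [Function.iterate_succ, Function.iterate_zero, Function.comp, id] at e1 e2 e3 e4 e5
    simp only [auxP, Polynomial.derivative_add, Polynomial.derivative_mul,
      Polynomial.derivative_one, Polynomial.eval_add, Polynomial.eval_mul, Polynomial.eval_one,
      Polynomial.eval_zero, Polynomial.derivative_zero, e1, e2, e3, e4, e5]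
    norm_num [Nat.factorial]
    ring
end

section
/- For every integer k ≥ 1 and every real λ > 0, the sixth factorial moment of the Poisson distribution of order k is M_{(6)}(k,λ) = κ₁⁶ λ⁶ + 30 κ₁⁴ κ₂ λ⁵ + (180 κ₁² κ₂² + 120 κ₁³ κ₃) λ⁴ + (360 κ₁² κ₄ + 120 κ₂³ + 720 κ₁ κ₂ κ₃) λ³ + (720 κ₁ κ₅ + 720 κ₂ κ₄ + 360 κ₃²) λ² + 720 κ₆ λ, where κ_j = C(k+1, j+1). -/
open scoped BigOperators

lemma pk_hs {ι : Type*} {f g : ι → ℝ} {a b : ℝ} (h : HasSum g b) (hf : ∀ x, f x = g x)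
    (ha : a = b) : HasSum f a := by
  rw [ha, show f = g from funext hf]; exact h

noncomputable def pkw {k : ℕ} (lam : ℝ) (f : Fin k → ℕ) : ℝ :=
  ∏ j, lam ^ (f j) / (f j).factorial

def pkT {k : ℕ} (f : Fin k → ℕ) : ℕ := ∑ j : Fin k, (j.1 + 1) * f j

lemma pkw_hasSum (k : ℕ) (lam : ℝ) (hlam : 0 < lam) :
    HasSum (fun f : Fin k → ℕ => pkw lam f) (Real.exp (k * lam)) := by
  induction k with
  | zero =>
    simp [pkw]
  | succ k ih =>
    have h1 : HasSum (fun n : ℕ => lam ^ n / (n.factorial : ℝ)) (Real.exp lam) := by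
      rw [Real.exp_eq_exp_ℝ]
      exact NormedSpace.expSeries_div_hasSum_exp lam
    have hs := Summable.mul_of_nonneg h1.summable ih.summable
      (fun n => by positivity) (fun f => Finset.prod_nonneg fun j _ => by positivity)
    have h2 := h1.mul ih hs
    rw [← (Fin.consEquiv (fun _ : Fin (k+1) => ℕ)).hasSum_iff]
    have e : Real.exp ((k + 1 : ℕ) * lam) = Real.exp lam * Real.exp (k * lam) := by
      rw [← Real.exp_add]; push_cast; ring_nf
    rw [e]
    refine pk_hs h2 (fun x => ?_) rfl
    simp only [Function.comp, pkw, Fin.prod_univ_succ, Fin.consEquiv]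
    simp

lemma pkw_add {k : ℕ} (lam : ℝ) (f : Fin k → ℕ) (j : Fin k) :
    ((f j : ℝ) + 1) * pkw lam (f + Pi.single j 1) = lam * pkw lam f := by
  unfold pkw
  rw [← Finset.mul_prod_erase _ _ (Finset.mem_univ j),
    ← Finset.mul_prod_erase _ (fun j => lam ^ (f j) / ((f j).factorial : ℝ)) (Finset.mem_univ j)]
  have : ∏ i ∈ Finset.univ.erase j, lam ^ ((f + Pi.single j 1 : Fin k → ℕ) i) /
      (((f + Pi.single j 1 : Fin k → ℕ) i).factorial : ℝ)
      = ∏ i ∈ Finset.univ.erase j, lam ^ (f i) / ((f i).factorial : ℝ) := by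
    refine Finset.prod_congr rfl fun i hi => ?_
    simp [Finset.ne_of_mem_erase hi]
  rw [this]
  simp only [Pi.add_apply, Pi.single_eq_same, Nat.factorial_succ]
  push_cast
  have h : ((f j).factorial : ℝ) ≠ 0 := by positivity
  have h' : (f j : ℝ) + 1 ≠ 0 := by positivity
  field_simp
  ring

lemma pkT_add {k : ℕ} (f : Fin k → ℕ) (j : Fin k) :
    pkT (f + Pi.single j 1) = pkT f + (j.1 + 1) := by
  unfold pkT
  simp [mul_add, Finset.sum_add_distrib, Pi.single_apply]

lemma pk_palm {k : ℕ} (lam : ℝ) (j : Fin k) (g : ℕ → ℝ) (S : ℝ)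
    (h : HasSum (fun f : Fin k → ℕ => g (pkT f + (j.1 + 1)) * pkw lam f) S) :
    HasSum (fun f : Fin k → ℕ => (f j : ℝ) * g (pkT f) * pkw lam f) (lam * S) := by
  have hinj : Function.Injective (fun f : Fin k → ℕ => (f + Pi.single j 1 : Fin k → ℕ)) :=
    fun a b hab => add_right_cancel hab
  rw [← hinj.hasSum_iff]
  · refine pk_hs (h.mul_left lam) (fun f => ?_) rfl
    have := pkw_add lam f j
    simp only [Function.comp, pkT_add, Pi.add_apply, Pi.single_eq_same]
    push_cast
    linear_combination g (pkT f + (j.1 + 1)) * this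
  · intro f hf
    have : f j = 0 := by
      by_contra h0
      apply hf
      refine ⟨f - Pi.single j 1, ?_⟩
      funext i
      by_cases hi : i = j
      · subst hi; simp; omega
      · simp [hi]
    simp [this]

lemma pk_hockey (k a : ℕ) :
    ∑ j : Fin k, (j.1 + 1).choose (a + 1) = (k + 1).choose (a + 2) := by
  rw [Fin.sum_univ_eq_sum_range (fun j => (j + 1).choose (a + 1))]
  induction k with
  | zero => simp [Nat.choose_eq_zero_of_lt]
  | succ k ih => rw [Finset.sum_range_succ, ih, Nat.choose_succ_succ (k+1) (a+1), add_comm]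

lemma pk_step (k n : ℕ) (lam : ℝ) (B : ℕ → ℝ)
    (hB : ∀ i ≤ n, HasSum (fun f : Fin k → ℕ => ((pkT f).choose i : ℝ) * pkw lam f) (B i)) :
    HasSum (fun f : Fin k → ℕ => ((pkT f).choose (n + 1) : ℝ) * pkw lam f)
      (lam / (n + 1) * ∑ p ∈ Finset.HasAntidiagonal.antidiagonal n, (p.2 + 1) * kappa k (p.2 + 1) * B p.1) := by
  have h1 : ∀ j : Fin k, HasSum (fun f : Fin k → ℕ =>
      (((pkT f + (j.1 + 1) - 1).choose n : ℕ) : ℝ) * pkw lam f)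
      (∑ p ∈ Finset.HasAntidiagonal.antidiagonal n, (j.1.choose p.2 : ℝ) * B p.1) := by
    intro j
    have : HasSum (fun f : Fin k → ℕ => ∑ p ∈ Finset.HasAntidiagonal.antidiagonal n,
        (j.1.choose p.2 : ℝ) * (((pkT f).choose p.1 : ℝ) * pkw lam f))
        (∑ p ∈ Finset.HasAntidiagonal.antidiagonal n, (j.1.choose p.2 : ℝ) * B p.1) := by
      refine hasSum_sum fun p hp => ?_
      exact (hB p.1 (by rw [Finset.HasAntidiagonal.mem_antidiagonal] at hp; omega)).mul_left _
    refine pk_hs this (fun f => ?_) rfl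
    rw [← add_assoc, Nat.add_sub_cancel, Nat.add_choose_eq]
    push_cast
    rw [Finset.sum_mul]
    exact Finset.sum_congr rfl fun p _ => by ring
  have h2 := hasSum_sum (s := Finset.univ) fun (j : Fin k) _ =>
    (pk_palm lam j (fun t => (((t - 1).choose n : ℕ) : ℝ)) _ (h1 j)).mul_left ((j.1 : ℝ) + 1)
  have h3 := h2.mul_left (1 / ((n : ℝ) + 1))
  have hn : (n : ℝ) + 1 ≠ 0 := by positivity
  refine pk_hs h3 (fun f => ?_) ?_
  · have e1 : ((pkT f).choose (n + 1) : ℝ) * (n + 1) = pkT f * ((pkT f - 1).choose n : ℝ) := by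
      rcases Nat.eq_zero_or_pos (pkT f) with h | h
      · simp [h]
      · obtain ⟨t, ht⟩ : ∃ t, pkT f = t + 1 := ⟨pkT f - 1, by omega⟩
        rw [ht, Nat.add_sub_cancel]
        exact_mod_cast (Nat.add_one_mul_choose_eq t n).symm
    have e2 : ∑ j : Fin k, ((j.1 : ℝ) + 1) * ((f j : ℝ) * ((pkT f - 1).choose n : ℝ) * pkw lam f)
        = pkT f * ((pkT f - 1).choose n : ℝ) * pkw lam f := by
      have : (pkT f : ℝ) = ∑ j : Fin k, ((j.1 : ℝ) + 1) * f j := by unfold pkT; push_cast; rfl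
      rw [this, Finset.sum_mul, Finset.sum_mul]
      exact Finset.sum_congr rfl fun p _ => by ring
    rw [e2, ← e1]
    field_simp
  · have e3 : ∀ j : Fin k, ((j.1 : ℝ) + 1) * (lam * ∑ p ∈ Finset.HasAntidiagonal.antidiagonal n,
        (j.1.choose p.2 : ℝ) * B p.1)
        = ∑ p ∈ Finset.HasAntidiagonal.antidiagonal n, lam * ((p.2 + 1) * ((j.1 + 1).choose (p.2 + 1) : ℝ) * B p.1) := by
      intro j
      rw [Finset.mul_sum, Finset.mul_sum]
      refine Finset.sum_congr rfl fun p _ => ?_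
      have : ((j.1 : ℝ) + 1) * (j.1.choose p.2 : ℝ) = ((j.1 + 1).choose (p.2 + 1) : ℝ) * (p.2 + 1) := by
        exact_mod_cast Nat.add_one_mul_choose_eq j.1 p.2
      linear_combination lam * B p.1 * this
    simp only [e3]
    rw [Finset.sum_comm, Finset.mul_sum, Finset.mul_sum]
    refine Finset.sum_congr rfl fun p _ => ?_
    have : kappa k (p.2 + 1) = ∑ j : Fin k, ((j.1 + 1).choose (p.2 + 1) : ℝ) := by
      unfold kappa
      rw [← pk_hockey]; push_cast; rfl
    rw [this, ← Finset.mul_sum, ← Finset.sum_mul, ← Finset.mul_sum]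
    field_simp

lemma pk_fiber (k m : ℕ) (lam : ℝ) (c : ℝ) :
    HasSum (fun f : {f : Fin k → ℕ // pkT f = m} => c * pkw lam f.1)
      (c * ∑ f ∈ orderkTuples k m, ∏ j : Fin k, lam ^ (f j).1 / (f j).1.factorial) := by
  apply HasSum.mul_left
  have hle : ∀ f : Fin k → ℕ, pkT f = m → ∀ j, f j < m + 1 := by
    intro f hf j
    have : (j.1 + 1) * f j ≤ pkT f :=
      Finset.single_le_sum (f := fun j : Fin k => (j.1 + 1) * f j) (fun _ _ => Nat.zero_le _)
        (Finset.mem_univ j)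
    nlinarith
  let e : {f : Fin k → Fin (m + 1) // f ∈ orderkTuples k m} ≃ {f : Fin k → ℕ // pkT f = m} :=
    { toFun := fun f => ⟨fun j => (f.1 j).1, by
        have := f.2
        simpa [orderkTuples, pkT] using this⟩
      invFun := fun f => ⟨fun j => ⟨f.1 j, hle f.1 f.2 j⟩, by
        have := f.2
        simpa [orderkTuples, pkT] using this⟩
      left_inv := fun f => rfl
      right_inv := fun f => rfl }
  rw [← e.hasSum_iff, ← Finset.sum_coe_sort]
  exact hasSum_fintype _



/-- The sixth factorial moment of the Poisson distribution of order `k` is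
`M_{(6)}(k,λ) = κ₁⁶λ⁶ + 30κ₁⁴κ₂λ⁵ + (180κ₁²κ₂² + 120κ₁³κ₃)λ⁴
  + (360κ₁²κ₄ + 120κ₂³ + 720κ₁κ₂κ₃)λ³ + (720κ₁κ₅ + 720κ₂κ₄ + 360κ₃²)λ² + 720κ₆λ`. -/
theorem poissonOrderK_sixthFactorialMoment (k : ℕ) (hk : 1 ≤ k) (lam : ℝ) (hlam : 0 < lam) :
    HasSum (fun m : ℕ => (m.descFactorial 6 : ℝ) * poissonOrderK k lam m)
      (kappa k 1 ^ 6 * lam ^ 6 + 30 * kappa k 1 ^ 4 * kappa k 2 * lam ^ 5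
        + (180 * kappa k 1 ^ 2 * kappa k 2 ^ 2 + 120 * kappa k 1 ^ 3 * kappa k 3) * lam ^ 4
        + (360 * kappa k 1 ^ 2 * kappa k 4 + 120 * kappa k 2 ^ 3
            + 720 * kappa k 1 * kappa k 2 * kappa k 3) * lam ^ 3
        + (720 * kappa k 1 * kappa k 5 + 720 * kappa k 2 * kappa k 4
            + 360 * kappa k 3 ^ 2) * lam ^ 2
        + 720 * kappa k 6 * lam) := by
  set B0 : ℝ := Real.exp (k * lam) with hB0
  have b0 : HasSum (fun f : Fin k → ℕ => ((pkT f).choose 0 : ℝ) * pkw lam f) B0 := by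
    simpa using pkw_hasSum k lam hlam
  have key : ∀ n, ∃ B : ℕ → ℝ, B 0 = B0 ∧
      (∀ i ≤ n, HasSum (fun f : Fin k → ℕ => ((pkT f).choose i : ℝ) * pkw lam f) (B i)) ∧
      ∀ i < n, B (i + 1) = lam / (i + 1) *
        ∑ p ∈ Finset.HasAntidiagonal.antidiagonal i, (p.2 + 1) * kappa k (p.2 + 1) * B p.1 := by
    intro n
    let B : ℕ → ℝ := fun i => ∑' f : Fin k → ℕ, ((pkT f).choose i : ℝ) * pkw lam f
    have hs : ∀ i, HasSum (fun f : Fin k → ℕ => ((pkT f).choose i : ℝ) * pkw lam f) (B i) := by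
      intro i
      induction i using Nat.strong_induction_on with
      | _ i ih =>
        cases i with
        | zero => exact b0.summable.hasSum
        | succ i => exact (pk_step k i lam B fun l hl => ih l (by omega)).summable.hasSum
    exact ⟨B, (hs 0).unique b0, fun i _ => hs i,
      fun i _ => (hs (i + 1)).unique (pk_step k i lam B fun l _ => hs l)⟩
  obtain ⟨B, h0, hs, hr⟩ := key 6
  have r1 := hr 0 (by norm_num)
  have r2 := hr 1 (by norm_num)
  have r3 := hr 2 (by norm_num)
  have r4 := hr 3 (by norm_num)
  have r5 := hr 4 (by norm_num)
  have r6 := hr 5 (by norm_num)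
  simp [Finset.Nat.antidiagonal_succ] at r1 r2 r3 r4 r5 r6
  have hm := (hs 6 le_rfl).mul_left (720 * Real.exp (-(k * lam)))
  rw [← (Equiv.sigmaFiberEquiv (pkT (k := k))).hasSum_iff] at hm
  have hfin := hm.sigma (g := fun m : ℕ => (m.descFactorial 6 : ℝ) * poissonOrderK k lam m) ?_
  · refine pk_hs hfin (fun _ => rfl) ?_
    have hE : Real.exp (-(k * lam)) * B 0 = 1 := by
      rw [h0, hB0, ← Real.exp_add]; simp
    set E := Real.exp (-(k * lam))
    have h6 : 720 * E * B 6 = 720 * (B 6 / B 0) * (E * B 0) := by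
      have : B 0 ≠ 0 := fun h => by simp [h] at hE
      field_simp
    have hb : B 0 ≠ 0 := fun h => by simp [h] at hE
    rw [h6, hE, r6, r5, r4, r3, r2, r1]
    field_simp
    ring
  · intro m
    refine pk_hs (pk_fiber k m lam ((m.descFactorial 6 : ℝ) * Real.exp (-(k * lam)))) (fun f => ?_) ?_
    · have hf : pkT f.1 = m := f.2
      simp only [Function.comp, Equiv.sigmaFiberEquiv, Equiv.coe_fn_mk, hf,
        Nat.descFactorial_eq_factorial_mul_choose]
      push_cast [Nat.factorial]
      ring
    · unfold poissonOrderK; ring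
end

section
/- For all integers k ≥ 2 and n ≥ 2, the coefficient of λ^{n−1} in the n-th factorial moment of the Poisson distribution of order k is c_{n−1}(n,k) = (n(n−1)/3) · (k(k+1)/2)^{n−1} · (k−1). -/
open scoped BigOperators

/-- The finite set of `k`-tuples `(n₁, …, n_k)` of nonnegative integers
(encoded as functions `Fin k → Fin (n+1)`) satisfying the two constraints
`n₁ + 2 n₂ + ⋯ + k n_k = n` and `n₁ + n₂ + ⋯ + n_k = r`. -/
def coeffTuples (k n r : ℕ) : Finset (Fin k → Fin (n + 1)) :=
  Finset.univ.filter
    (fun f => (∑ j : Fin k, (j.1 + 1) * (f j).1 = n) ∧ (∑ j : Fin k, (f j).1 = r))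

/-- The coefficient of `λ^r` in the `n`-th factorial moment of the Poisson distribution
of order `k`:  `c_r(n,k) = n! ∑ ∏_{j=1}^k κ_j^{n_j}/n_j!`, where `κ_j = C(k+1, j+1)`
and the sum ranges over tuples with `n₁+2n₂+⋯+k n_k = n` and `n₁+⋯+n_k = r`. -/
noncomputable def facMomCoeff (n k r : ℕ) : ℝ :=
  (n.factorial : ℝ) *
    ∑ f ∈ coeffTuples k n r, ∏ j : Fin k,
      ((k + 1).choose (j.1 + 2) : ℝ) ^ (f j).1 / (f j).1.factorial

theorem coeffTuples_aux (m p : ℕ) (f : Fin (m + 2) → Fin (p + 2 + 1)) :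
    f ∈ coeffTuples (m + 2) (p + 2) (p + 1) ↔
      (f 0).1 = p ∧ (f 1).1 = 1 ∧ ∀ i : Fin m, (f i.succ.succ).1 = 0 := by
  unfold coeffTuples
  rw [Finset.mem_filter]
  simp only [Finset.mem_univ, true_and, Fin.sum_univ_succ, Fin.val_succ, Fin.val_zero,
    Fin.succ_zero_eq_one]
  constructor
  · rintro ⟨h1, h2⟩
    have h3 : ∑ i : Fin m, 3 * (f i.succ.succ).1
        ≤ ∑ i : Fin m, (i.1 + 1 + 1 + 1) * (f i.succ.succ).1 :=
      Finset.sum_le_sum fun i _ => Nat.mul_le_mul_right _ (by omega)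
    rw [← Finset.mul_sum] at h3
    have h4 : ∑ i : Fin m, (f i.succ.succ).1 = 0 := by omega
    have h5 : ∀ i : Fin m, (f i.succ.succ).1 = 0 := by
      intro i
      exact (Finset.sum_eq_zero_iff.mp h4) i (Finset.mem_univ i)
    have h6 : ∑ i : Fin m, (i.1 + 1 + 1 + 1) * (f i.succ.succ).1 = 0 :=
      Finset.sum_eq_zero fun i _ => by rw [h5 i, Nat.mul_zero]
    exact ⟨by omega, by omega, h5⟩
  · rintro ⟨h1, h2, h3⟩
    simp only [h1, h2, h3, Nat.mul_zero, Finset.sum_const_zero]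
    constructor <;> omega

/-- For `k ≥ 2` and `n ≥ 2`, the coefficient of `λ^{n−1}` in the `n`-th factorial
moment of the Poisson distribution of order `k` is
`(n(n−1)/3) (k(k+1)/2)^{n−1} (k−1)`. -/
theorem facMomCoeff_second (k n : ℕ) (hk : 2 ≤ k) (hn : 2 ≤ n) :
    facMomCoeff n k (n - 1)
      = (n : ℝ) * ((n : ℝ) - 1) / 3 * ((k : ℝ) * (k + 1) / 2) ^ (n - 1) * ((k : ℝ) - 1) := by
  obtain ⟨m, rfl⟩ : ∃ m, k = m + 2 := ⟨k - 2, by omega⟩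
  obtain ⟨p, rfl⟩ : ∃ p, n = p + 2 := ⟨n - 2, by omega⟩
  have hs : p + 2 - 1 = p + 1 := rfl
  rw [hs]
  let g : Fin (m + 2) → Fin (p + 2 + 1) :=
    Fin.cons ⟨p, by omega⟩ (Fin.cons ⟨1, by omega⟩ fun _ => ⟨0, by omega⟩)
  have hg0 : (g 0).1 = p := rfl
  have hg1 : (g 1).1 = 1 := rfl
  have hg2 : ∀ i : Fin m, (g i.succ.succ).1 = 0 := fun i => rfl
  have hset : coeffTuples (m + 2) (p + 2) (p + 1) = {g} := by
    ext f
    rw [coeffTuples_aux, Finset.mem_singleton]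
    constructor
    · rintro ⟨h0, h1, h2⟩
      funext j
      apply Fin.ext
      refine Fin.cases ?_ (fun j => ?_) j
      · rw [h0, hg0]
      · refine Fin.cases ?_ (fun j => ?_) j
        · exact h1.trans hg1.symm
        · rw [h2, hg2]
    · rintro rfl
      exact ⟨hg0, hg1, hg2⟩
  have c1 : ((m + 2 + 1).choose 2 : ℝ) = ((m : ℝ) + 2) * (m + 2 + 1) / 2 := by
    rw [Nat.cast_choose_two]
    push_cast
    ring
  have c2 : ((m + 2 + 1).choose 3 : ℝ) = ((m : ℝ) + 2) * (m + 2 + 1) / 2 * (m + 1) / 3 := by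
    have h := Nat.choose_succ_right_eq (m + 2 + 1) 2
    have h' : m + 2 + 1 - 2 = m + 1 := by omega
    rw [h'] at h
    have h2 : ((m + 2 + 1).choose 3 : ℝ) * 3 = ((m + 2 + 1).choose 2 : ℝ) * (m + 1) := by
      exact_mod_cast h
    rw [c1] at h2
    linarith
  unfold facMomCoeff
  rw [hset, Finset.sum_singleton]
  simp only [Fin.prod_univ_succ, Fin.succ_zero_eq_one, hg0, hg1, hg2, Fin.val_zero, Fin.val_one,
    pow_zero, pow_one, Nat.factorial_zero, Nat.factorial_one, Nat.cast_one, div_one,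
    Finset.prod_const_one, mul_one, Nat.zero_add, Nat.reduceAdd]
  rw [c1, c2, Nat.factorial_succ, Nat.factorial_succ]
  have hf : (p.factorial : ℝ) ≠ 0 := by exact_mod_cast p.factorial_ne_zero
  push_cast
  field_simp
  ring
end

section
/- For all integers k ≥ 3 and n ≥ 3, the coefficient of λ^{n−2} in the n-th factorial moment of the Poisson distribution of order k is c_{n−2}(n,k) = (1/6) · C(n,3) · (k(k+1)/2)^{n−2} · (k−1) · ((2n−3)k − 2n). -/
open scoped BigOperators

/-- The tuple `(a, b, c, 0, …, 0)`. -/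
def tupABC (m N : ℕ) (a b c : Fin (N + 1)) : Fin (m + 3) → Fin (N + 1) :=
  Fin.cons a (Fin.cons b (Fin.cons c (fun _ => 0)))

lemma tupABC_sum {M : Type*} [AddCommMonoid M] (m N : ℕ) (a b c : Fin (N + 1))
    (F : ℕ → ℕ → M) (hF : ∀ j, F j 0 = 0) :
    ∑ j : Fin (m + 3), F j.1 (tupABC m N a b c j).1 = F 0 a.1 + (F 1 b.1 + F 2 c.1) := by
  simp [Fin.sum_univ_succ, tupABC, hF]

lemma tupABC_prod {M : Type*} [CommMonoid M] (m N : ℕ) (a b c : Fin (N + 1))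
    (F : ℕ → ℕ → M) (hF : ∀ j, F j 0 = 1) :
    ∏ j : Fin (m + 3), F j.1 (tupABC m N a b c j).1 = F 0 a.1 * (F 1 b.1 * F 2 c.1) := by
  simp [Fin.prod_univ_succ, tupABC, hF]

lemma tupABC_mem (m N r : ℕ) (a b c : Fin (N + 1)) :
    tupABC m N a b c ∈ coeffTuples (m + 3) N r ↔
      (a.1 + 2 * b.1 + 3 * c.1 = N ∧ a.1 + b.1 + c.1 = r) := by
  have h1 := tupABC_sum m N a b c (fun j x => (j + 1) * x) (by simp)
  have h2 := tupABC_sum m N a b c (fun _ x => x) (by simp)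
  simp only [coeffTuples, Finset.mem_filter, Finset.mem_univ, true_and]
  rw [h1, h2]
  constructor <;> rintro ⟨h, h'⟩ <;> constructor <;> omega

lemma eq_tupABC (m p : ℕ) (f : Fin (m + 3) → Fin (p + 3 + 1))
    (hf : f ∈ coeffTuples (m + 3) (p + 3) (p + 1)) :
    f = tupABC m (p + 3) (f 0) (f 1) (f 2) := by
  simp only [coeffTuples, Finset.mem_filter, Finset.mem_univ, true_and] at hf
  obtain ⟨h1, h2⟩ := hf
  have h3 : ∑ j : Fin (m + 3), j.1 * (f j).1 = 2 := by
    simp only [add_mul, one_mul, Finset.sum_add_distrib] at h1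
    omega
  funext j
  refine Fin.cases ?_ (fun j => ?_) j
  · simp [tupABC]
  refine Fin.cases ?_ (fun j => ?_) j
  · simp [tupABC]
  refine Fin.cases ?_ (fun j => ?_) j
  · simp [tupABC]; rfl
  have h4 := Finset.single_le_sum (f := fun j : Fin (m + 3) => j.1 * (f j).1)
    (fun _ _ => Nat.zero_le _) (Finset.mem_univ j.succ.succ.succ)
  simp only [h3] at h4
  have h5 : (f j.succ.succ.succ).1 = 0 := by
    by_contra h
    have : 1 ≤ (f j.succ.succ.succ).1 := by omega
    have h6 : j.succ.succ.succ.1 = j.1 + 3 := rfl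
    rw [h6] at h4
    nlinarith
  apply Fin.ext
  rw [h5]
  simp [tupABC]

lemma mem_iff (m p : ℕ) (f : Fin (m + 3) → Fin (p + 3 + 1)) :
    f ∈ coeffTuples (m + 3) (p + 3) (p + 1) ↔
      f = tupABC m (p + 3) ⟨p, by omega⟩ ⟨0, by omega⟩ ⟨1, by omega⟩ ∨
      (1 ≤ p ∧ f = tupABC m (p + 3) ⟨p - 1, by omega⟩ ⟨2, by omega⟩ ⟨0, by omega⟩) := by
  constructor
  · intro hf
    have he := eq_tupABC m p f hf
    rw [he, tupABC_mem] at hf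
    rw [he]
    generalize f 0 = a at *
    generalize f 1 = b at *
    generalize f 2 = c at *
    obtain ⟨a, ha⟩ := a
    obtain ⟨b, hb⟩ := b
    obtain ⟨c, hc⟩ := c
    simp only at hf
    have : (a = p ∧ b = 0 ∧ c = 1) ∨ (1 ≤ p ∧ a = p - 1 ∧ b = 2 ∧ c = 0) := by omega
    rcases this with ⟨rfl, rfl, rfl⟩ | ⟨h, rfl, rfl, rfl⟩
    · left; rfl
    · right; exact ⟨h, rfl⟩
  · rintro (rfl | ⟨h, rfl⟩) <;> rw [tupABC_mem] <;> constructor <;> dsimp only <;> omega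

lemma choose_facts (m : ℕ) :
    ((m + 3 + 1).choose 2 : ℝ) = (m + 3) * (m + 4) / 2 ∧
    ((m + 3 + 1).choose 3 : ℝ) = (m + 3) * (m + 4) / 2 * ((m + 2) / 3) ∧
    ((m + 3 + 1).choose 4 : ℝ) = (m + 3) * (m + 4) / 2 * ((m + 2) * (m + 1) / 12) := by
  have e2 : ((m + 3 + 1).choose 2 : ℝ) = (m + 3) * (m + 4) / 2 := by
    rw [Nat.cast_choose_two]; push_cast; ring
  have h3 := Nat.choose_succ_right_eq (m + 3 + 1) 2
  have h4 := Nat.choose_succ_right_eq (m + 3 + 1) 3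
  rw [show m + 3 + 1 - 2 = m + 2 by omega] at h3
  rw [show m + 3 + 1 - 3 = m + 1 by omega] at h4
  have h3' := congrArg (Nat.cast : ℕ → ℝ) h3
  have h4' := congrArg (Nat.cast : ℕ → ℝ) h4
  push_cast at h3' h4'
  have e3 : ((m + 3 + 1).choose 3 : ℝ) = (m + 3) * (m + 4) / 2 * ((m + 2) / 3) := by
    rw [e2] at h3'; linarith
  refine ⟨e2, e3, ?_⟩
  rw [e3] at h4'; linarith

lemma choose_three (p : ℕ) :
    ((p + 3).factorial : ℝ) = ((p + 3).choose 3 : ℝ) * 6 * p.factorial := by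
  have := Nat.add_choose_mul_factorial_mul_factorial p 3
  have h3 : Nat.factorial 3 = 6 := rfl
  rw [h3] at this
  rw [← this]; push_cast; ring

theorem facMomCoeff_third (k n : ℕ) (hk : 3 ≤ k) (hn : 3 ≤ n) :
    facMomCoeff n k (n - 2)
      = 1 / 6 * (n.choose 3 : ℝ) * ((k : ℝ) * (k + 1) / 2) ^ (n - 2) * ((k : ℝ) - 1)
          * ((2 * (n : ℝ) - 3) * k - 2 * n) := by
  obtain ⟨m, rfl⟩ := Nat.exists_eq_add_of_le' hk
  obtain ⟨p, rfl⟩ := Nat.exists_eq_add_of_le' hn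
  rw [show p + 3 - 2 = p + 1 by omega]
  obtain ⟨e2, e3, e4⟩ := choose_facts m
  have hP := fun a b c => tupABC_prod m (p + 3) a b c
    (fun j x => ((m + 3 + 1).choose (j + 2) : ℝ) ^ x / x.factorial) (by simp)
  simp only [zero_add, Nat.reduceAdd, e2, e3, e4] at hP
  unfold facMomCoeff
  rw [choose_three]
  have hk1 : ((m + 3 : ℕ) : ℝ) * ((m + 3 : ℕ) + 1) / 2 = (m + 3) * (m + 4) / 2 := by
    push_cast; ring
  rw [hk1]
  rcases p with _ | q
  · have hs : coeffTuples (m + 3) (0 + 3) (0 + 1) =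
        {tupABC m (0 + 3) ⟨0, by omega⟩ ⟨0, by omega⟩ ⟨1, by omega⟩} := by
      ext f; rw [mem_iff]; simp
    rw [hs, Finset.sum_singleton, hP]
    simp
    ring
  · have hs : coeffTuples (m + 3) (q + 1 + 3) (q + 1 + 1) =
        {tupABC m (q + 1 + 3) ⟨q + 1, by omega⟩ ⟨0, by omega⟩ ⟨1, by omega⟩,
         tupABC m (q + 1 + 3) ⟨q, by omega⟩ ⟨2, by omega⟩ ⟨0, by omega⟩} := by
      ext f; rw [mem_iff]; simp
    rw [hs, Finset.sum_pair, hP, hP]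
    · have hq : (q.factorial : ℝ) ≠ 0 := by positivity
      have hq1 : (q : ℝ) + 1 ≠ 0 := by positivity
      simp only [Nat.factorial_succ, Nat.factorial_zero, pow_zero, pow_one]
      push_cast
      generalize (m + 3 : ℝ) * (m + 4) / 2 = K
      field_simp
      ring
    · intro h
      have := congrFun h 1
      simp [tupABC, Fin.ext_iff] at this
end

section
/- For all integers k ≥ 4 and n ≥ 4, the coefficient of λ^{n−3} in the n-th factorial moment of the Poisson distribution of order k is c_{n−3}(n,k) = (2/135) · C(n,4) · (k(k+1)/2)^{n−3} · (k−1) · [ (10n²−45n+47)k² − 5(4n²−9n−1)k + 2(5n²+1) ]. -/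
open scoped BigOperators

/-- The tuple with prescribed first four entries and zeros afterwards. -/
def tup (m n a b c d : ℕ) : Fin (m + 4) → Fin (n + 1) := fun j =>
  Fin.ofNat (n + 1)
    (if j.1 = 0 then a else if j.1 = 1 then b else if j.1 = 2 then c
      else if j.1 = 3 then d else 0)

lemma sum_split (m : ℕ) (g : Fin (m + 4) → ℕ) :
    ∑ j : Fin (m + 4), g j = g ⟨0, by omega⟩ + g ⟨1, by omega⟩ + g ⟨2, by omega⟩
      + g ⟨3, by omega⟩ + ∑ j : Fin m, g ⟨j.1 + 4, by omega⟩ := by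
  rw [Fin.sum_univ_succ, Fin.sum_univ_succ, Fin.sum_univ_succ, Fin.sum_univ_succ]
  simp only [← add_assoc]
  rfl

lemma prod_split (m : ℕ) (g : Fin (m + 4) → ℝ) :
    ∏ j : Fin (m + 4), g j = g ⟨0, by omega⟩ * g ⟨1, by omega⟩ * g ⟨2, by omega⟩
      * g ⟨3, by omega⟩ * ∏ j : Fin m, g ⟨j.1 + 4, by omega⟩ := by
  rw [Fin.prod_univ_succ, Fin.prod_univ_succ, Fin.prod_univ_succ, Fin.prod_univ_succ]
  simp only [← mul_assoc]
  rfl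

lemma tup_val (m n a b c d : ℕ) (ha : a ≤ n) (hb : b ≤ n) (hc : c ≤ n) (hd : d ≤ n)
    (j : Fin (m + 4)) : (tup m n a b c d j).1 =
    (if j.1 = 0 then a else if j.1 = 1 then b else if j.1 = 2 then c
      else if j.1 = 3 then d else 0) := by
  unfold tup
  simp only [Fin.val_ofNat]
  apply Nat.mod_eq_of_lt
  split_ifs <;> omega

lemma prod_tup (m n a b c d : ℕ) (ha : a ≤ n) (hb : b ≤ n) (hc : c ≤ n) (hd : d ≤ n)
    (κ : ℕ → ℝ) :
    ∏ j : Fin (m + 4), κ (j.1 + 2) ^ (tup m n a b c d j).1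
        / ((tup m n a b c d j).1.factorial : ℝ)
      = κ 2 ^ a / a.factorial * (κ 3 ^ b / b.factorial) * (κ 4 ^ c / c.factorial)
        * (κ 5 ^ d / d.factorial) := by
  rw [prod_split]
  simp only [tup_val m n a b c d ha hb hc hd]
  simp

lemma mem_tup (m n r a b c d : ℕ) (ha : a ≤ n) (hb : b ≤ n) (hc : c ≤ n) (hd : d ≤ n)
    (h1 : a + 2 * b + 3 * c + 4 * d = n) (h2 : a + b + c + d = r) :
    tup m n a b c d ∈ coeffTuples (m + 4) n r := by
  simp only [coeffTuples, Finset.mem_filter, Finset.mem_univ, true_and]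
  rw [sum_split, sum_split]
  simp only [tup_val m n a b c d ha hb hc hd]
  simp
  omega

lemma eq_tup (m p : ℕ) (f : Fin (m + 4) → Fin (p + 4 + 1))
    (hf : f ∈ coeffTuples (m + 4) (p + 4) (p + 1)) :
    ∃ a b c d : ℕ, a + 2 * b + 3 * c + 4 * d = p + 4 ∧ a + b + c + d = p + 1 ∧
      f = tup m (p + 4) a b c d := by
  simp only [coeffTuples, Finset.mem_filter, Finset.mem_univ, true_and] at hf
  rw [sum_split, sum_split] at hf
  obtain ⟨h1, h2⟩ := hf
  have hW : 5 * ∑ j : Fin m, (f ⟨j.1 + 4, by omega⟩).1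
      ≤ ∑ j : Fin m, (j.1 + 4 + 1) * (f ⟨j.1 + 4, by omega⟩).1 := by
    rw [Finset.mul_sum]
    refine Finset.sum_le_sum fun j _ => ?_
    exact Nat.mul_le_mul_right _ (by omega)
  simp only at h1 h2
  have hS : ∑ j : Fin m, (f ⟨j.1 + 4, by omega⟩).1 = 0 := by omega
  have hW0 : ∑ j : Fin m, (j.1 + 4 + 1) * (f ⟨j.1 + 4, by omega⟩).1 = 0 := by
    rw [Finset.sum_eq_zero_iff] at hS ⊢
    intro j hj
    rw [hS j hj, mul_zero]
  rw [hS] at h2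
  rw [hW0] at h1
  rw [Finset.sum_eq_zero_iff] at hS
  refine ⟨(f ⟨0, by omega⟩).1, (f ⟨1, by omega⟩).1, (f ⟨2, by omega⟩).1,
    (f ⟨3, by omega⟩).1, by omega, by omega, ?_⟩
  funext j
  apply Fin.ext
  rw [tup_val _ _ _ _ _ _ (by omega) (by omega) (by omega) (by omega)]
  obtain ⟨j, hj⟩ := j
  match j, hj with
  | 0, _ => simp
  | 1, _ => simp
  | 2, _ => simp
  | 3, _ => simp
  | i + 4, h => simpa using hS ⟨i, by omega⟩ (Finset.mem_univ _)

lemma tup_ne (m n a b c d b' a' c' d' : ℕ) (hd : d ≤ n) (hb : b ≤ n) (ha : a ≤ n) (hc : c ≤ n)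
    (hd' : d' ≤ n) (hb' : b' ≤ n) (ha' : a' ≤ n) (hc' : c' ≤ n) (h : b ≠ b') :
    tup m n a b c d ≠ tup m n a' b' c' d' := by
  intro he
  have := congrArg Fin.val (congrFun he ⟨1, by omega⟩)
  rw [tup_val _ _ _ _ _ _ ha hb hc hd, tup_val _ _ _ _ _ _ ha' hb' hc' hd'] at this
  simp at this
  exact h this

lemma set0 (m : ℕ) : coeffTuples (m + 4) 4 1 = {tup m 4 0 0 0 1} := by
  ext f
  simp only [Finset.mem_singleton]
  constructor
  · intro h
    obtain ⟨a, b, c, d, h1, h2, rfl⟩ := eq_tup m 0 f h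
    obtain ⟨rfl, rfl, rfl, rfl⟩ : a = 0 ∧ b = 0 ∧ c = 0 ∧ d = 1 := by omega
    rfl
  · rintro rfl
    apply mem_tup <;> omega

lemma set1 (m : ℕ) : coeffTuples (m + 4) 5 2 = {tup m 5 1 0 0 1, tup m 5 0 1 1 0} := by
  ext f
  simp only [Finset.mem_insert, Finset.mem_singleton]
  constructor
  · intro h
    obtain ⟨a, b, c, d, h1, h2, rfl⟩ := eq_tup m 1 f h
    have : (a = 1 ∧ b = 0 ∧ c = 0 ∧ d = 1) ∨ (a = 0 ∧ b = 1 ∧ c = 1 ∧ d = 0) := by omega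
    rcases this with ⟨rfl, rfl, rfl, rfl⟩ | ⟨rfl, rfl, rfl, rfl⟩ <;> simp
  · rintro (rfl | rfl) <;> apply mem_tup <;> omega

lemma set2 (m q : ℕ) : coeffTuples (m + 4) (q + 6) (q + 3) =
    {tup m (q + 6) (q + 2) 0 0 1, tup m (q + 6) (q + 1) 1 1 0, tup m (q + 6) q 3 0 0} := by
  ext f
  simp only [Finset.mem_insert, Finset.mem_singleton]
  constructor
  · intro h
    obtain ⟨a, b, c, d, h1, h2, rfl⟩ := eq_tup m (q + 2) f h
    have : (a = q + 2 ∧ b = 0 ∧ c = 0 ∧ d = 1) ∨ (a = q + 1 ∧ b = 1 ∧ c = 1 ∧ d = 0)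
        ∨ (a = q ∧ b = 3 ∧ c = 0 ∧ d = 0) := by omega
    rcases this with ⟨rfl, rfl, rfl, rfl⟩ | ⟨rfl, rfl, rfl, rfl⟩ | ⟨rfl, rfl, rfl, rfl⟩ <;> simp
  · rintro (rfl | rfl | rfl) <;> apply mem_tup <;> omega

lemma choose_step (N j : ℕ) : (N.choose (j + 1) : ℝ) = N.choose j * ((N : ℝ) - j) / (j + 1) := by
  rw [eq_div_iff (by positivity)]
  rcases le_or_gt j N with h | h
  · have := Nat.choose_succ_right_eq N j
    have h2 : ((N.choose (j + 1) * (j + 1) : ℕ) : ℝ) = ((N.choose j * (N - j) : ℕ) : ℝ) := by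
      rw [this]
    push_cast [Nat.cast_sub h] at h2
    exact h2
  · rw [Nat.choose_eq_zero_of_lt h, Nat.choose_eq_zero_of_lt (by omega)]
    simp

lemma ch2 (k : ℕ) : ((k + 1).choose 2 : ℝ) = (k : ℝ) * (k + 1) / 2 := by
  rw [choose_step (k + 1) 1, Nat.choose_one_right]; push_cast; ring
lemma ch3 (k : ℕ) : ((k + 1).choose 3 : ℝ) = (k : ℝ) * (k + 1) / 2 * ((k - 1) / 3) := by
  rw [choose_step (k + 1) 2, ch2]; push_cast; ring
lemma ch4 (k : ℕ) : ((k + 1).choose 4 : ℝ)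
    = (k : ℝ) * (k + 1) / 2 * ((k - 1) * (k - 2) / 12) := by
  rw [choose_step (k + 1) 3, ch3]; push_cast; ring
lemma ch5 (k : ℕ) : ((k + 1).choose 5 : ℝ)
    = (k : ℝ) * (k + 1) / 2 * ((k - 1) * (k - 2) * (k - 3) / 60) := by
  rw [choose_step (k + 1) 4, ch4]; push_cast; ring
lemma chn (n : ℕ) : (n.choose 4 : ℝ) = (n : ℝ) * (n - 1) * (n - 2) * (n - 3) / 24 := by
  rw [choose_step n 3, choose_step n 2, choose_step n 1, Nat.choose_one_right]; push_cast; ring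

/-- For `k ≥ 4` and `n ≥ 4`, the coefficient of `λ^{n−3}` in the `n`-th factorial
moment of the Poisson distribution of order `k` is
`(2/135) C(n,4) (k(k+1)/2)^{n−3} (k−1) [(10n²−45n+47)k² − 5(4n²−9n−1)k + 2(5n²+1)]`. -/
theorem facMomCoeff_fourth (k n : ℕ) (hk : 4 ≤ k) (hn : 4 ≤ n) :
    facMomCoeff n k (n - 3)
      = 2 / 135 * (n.choose 4 : ℝ) * ((k : ℝ) * (k + 1) / 2) ^ (n - 3) * ((k : ℝ) - 1)
          * ((10 * (n : ℝ) ^ 2 - 45 * n + 47) * (k : ℝ) ^ 2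
              - 5 * (4 * (n : ℝ) ^ 2 - 9 * n - 1) * k
              + 2 * (5 * (n : ℝ) ^ 2 + 1)) := by
  obtain ⟨m, rfl⟩ : ∃ m, k = m + 4 := ⟨k - 4, by omega⟩
  have key := fun n a b c d ha hb hc hd => prod_tup m n a b c d ha hb hc hd
    (fun i => ((m + 4 + 1).choose i : ℝ))
  obtain h | h | ⟨q, h⟩ : n = 4 ∨ n = 5 ∨ ∃ q, n = q + 6 := by
    rcases Nat.lt_or_ge n 6 with h | h
    · omega
    · exact Or.inr (Or.inr ⟨n - 6, by omega⟩)
  · subst h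
    rw [facMomCoeff, show 4 - 3 = 1 from rfl, set0, Finset.sum_singleton,
      key _ _ _ _ _ (by omega) (by omega) (by omega) (by omega),
      ch2, ch3, ch4, ch5, chn]
    simp [Nat.factorial]
    ring
  · subst h
    rw [facMomCoeff, show 5 - 3 = 2 from rfl, set1, Finset.sum_pair
      (by apply tup_ne <;> omega),
      key _ _ _ _ _ (by omega) (by omega) (by omega) (by omega),
      key _ _ _ _ _ (by omega) (by omega) (by omega) (by omega),
      ch2, ch3, ch4, ch5, chn]
    simp [Nat.factorial]
    ring
  · subst h
    have n1 : tup m (q + 6) (q + 2) 0 0 1 ≠ tup m (q + 6) (q + 1) 1 1 0 := by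
      apply tup_ne <;> omega
    have n2 : tup m (q + 6) (q + 2) 0 0 1 ≠ tup m (q + 6) q 3 0 0 := by
      apply tup_ne <;> omega
    have n3 : tup m (q + 6) (q + 1) 1 1 0 ≠ tup m (q + 6) q 3 0 0 := by
      apply tup_ne <;> omega
    rw [facMomCoeff, show q + 6 - 3 = q + 3 from rfl, set2,
      Finset.sum_insert (by simp [n1, n2]), Finset.sum_pair n3,
      key _ _ _ _ _ (by omega) (by omega) (by omega) (by omega),
      key _ _ _ _ _ (by omega) (by omega) (by omega) (by omega),
      key _ _ _ _ _ (by omega) (by omega) (by omega) (by omega),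
      ch2, ch3, ch4, ch5, chn]
    have hq : (q.factorial : ℝ) ≠ 0 := by positivity
    have hq1 : (q : ℝ) + 1 ≠ 0 := by positivity
    have hq2 : (q : ℝ) + 1 + 1 ≠ 0 := by positivity
    generalize hK : (((m + 4 : ℕ) : ℝ) * (((m + 4 : ℕ) : ℝ) + 1) / 2) = K
    generalize ((m + 4 : ℕ) : ℝ) = x
    simp only [Nat.factorial_succ, Nat.factorial_zero]
    push_cast
    field_simp
    ring
end

section
/- For all integers k ≥ 1 and n ≥ 1, the coefficient of the lowest power λ¹ in the n-th factorial moment of the Poisson distribution of order k is c_1(n,k) = n! · C(k+1, n+1) = (k+1)k(k−1)⋯(k−n+1)/(n+1); in particular this coefficient is zero when k < n. -/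
open scoped BigOperators

theorem coeffTuples_one_mem (k n : ℕ) (f : Fin k → Fin (n + 1)) (hf : f ∈ coeffTuples k n 1) :
    ∃ j : Fin k, j.1 + 1 = n ∧ (f j).1 = 1 ∧ ∀ i, i ≠ j → (f i).1 = 0 := by
  simp only [coeffTuples, Finset.mem_filter, Finset.mem_univ, true_and] at hf
  obtain ⟨h1, h2⟩ := hf
  obtain ⟨j, -, hj⟩ : ∃ j ∈ (Finset.univ : Finset (Fin k)), (f j).1 ≠ 0 := by
    apply Finset.exists_ne_zero_of_sum_ne_zero
    omega
  have h3 := Finset.add_sum_erase Finset.univ (fun j => (f j).1) (Finset.mem_univ j)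
  have h4 : ∑ i ∈ Finset.univ.erase j, (f i).1 = 0 := by omega
  have h5 : ∀ i, i ≠ j → (f i).1 = 0 := by
    intro i hi
    exact (Finset.sum_eq_zero_iff.1 h4) i (by simp [hi])
  have h6 : (f j).1 = 1 := by omega
  refine ⟨j, ?_, h6, h5⟩
  rw [Finset.sum_eq_single j (fun i _ hi => by rw [h5 i hi, mul_zero]) (by simp), h6] at h1
  omega

theorem facMomCoeff_one_aux (k n : ℕ) (hn : 1 ≤ n) :
    facMomCoeff n k 1 = (n.factorial : ℝ) * ((k + 1).choose (n + 1) : ℝ) := by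
  unfold facMomCoeff
  congr 1
  by_cases hkn : k < n
  · rw [Nat.choose_eq_zero_of_lt (by omega), Nat.cast_zero]
    apply Finset.sum_eq_zero
    intro f hf
    obtain ⟨j, hj, -⟩ := coeffTuples_one_mem k n f hf
    have := j.2
    omega
  · let j0 : Fin k := ⟨n - 1, by omega⟩
    let f0 : Fin k → Fin (n + 1) := fun i => if i = j0 then ⟨1, by omega⟩ else ⟨0, by omega⟩
    have hf0 : ∀ i, (f0 i).1 = if i = j0 then 1 else 0 := by
      intro i
      simp only [f0]
      split_ifs <;> rfl
    rw [Finset.sum_eq_single f0]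
    · rw [Finset.prod_eq_single j0]
      · rw [hf0, if_pos rfl]
        have : j0.1 + 2 = n + 1 := by simp only [j0]; omega
        simp [this]
      · intro i _ hi
        rw [hf0, if_neg hi]
        simp
      · simp
    · intro f hf hne
      exfalso
      apply hne
      obtain ⟨j, hj, h1, h0⟩ := coeffTuples_one_mem k n f hf
      have hjj : j = j0 := by
        apply Fin.ext
        simp only [j0]
        omega
      subst hjj
      funext i
      apply Fin.ext
      rw [hf0]
      split_ifs with h
      · rw [h, h1]
      · exact h0 i h
    · intro h
      exfalso
      apply h
      simp only [coeffTuples, Finset.mem_filter, Finset.mem_univ, true_and, hf0]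
      simp [j0]
      omega

theorem prod_range_eq_factorial_mul_choose (m N : ℕ) :
    ∏ i ∈ Finset.range N, ((m : ℝ) - i) = (N.factorial : ℝ) * (m.choose N : ℝ) := by
  rw [← descPochhammer_eval_eq_prod_range, descPochhammer_eval_eq_descFactorial,
    Nat.descFactorial_eq_factorial_mul_choose, Nat.cast_mul]

theorem facMomCoeff_lowest (k n : ℕ) (hk : 1 ≤ k) (hn : 1 ≤ n) :
    facMomCoeff n k 1 = (n.factorial : ℝ) * ((k + 1).choose (n + 1) : ℝ) ∧
    facMomCoeff n k 1 = (∏ i ∈ Finset.range (n + 1), ((k : ℝ) + 1 - i)) / ((n : ℝ) + 1) ∧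
    (k < n → facMomCoeff n k 1 = 0) := by
  have h := facMomCoeff_one_aux k n hn
  refine ⟨h, ?_, ?_⟩
  · have h2 := prod_range_eq_factorial_mul_choose (k + 1) (n + 1)
    push_cast at h2
    have h3 : (n : ℝ) + 1 ≠ 0 := by positivity
    rw [h, h2, Nat.factorial_succ]
    push_cast
    field_simp
  · intro hkn
    rw [h, Nat.choose_eq_zero_of_lt (by omega)]
    simp
end

section
/- For all integers k ≥ 1 and n ≥ 1, the polynomial M_{(n)}(k,λ) contains all powers of λ from λ^n down to λ^{⌈n/k⌉}: the coefficient c_r(n,k) is strictly positive for every integer r with ⌈n/k⌉ ≤ r ≤ n. -/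
open scoped BigOperators

/-- Every `n` with `r ≤ n ≤ k * r` is a sum of `r` parts from `{1, …, k}`. -/
lemma exists_tuple (k : ℕ) (hk : 1 ≤ k) (r : ℕ) : ∀ n : ℕ, r ≤ n → n ≤ k * r →
    ∃ f : Fin k → ℕ, (∑ j : Fin k, (j.1 + 1) * f j = n) ∧ (∑ j : Fin k, f j = r) := by
  induction r with
  | zero =>
    intro n _ h
    refine ⟨fun _ => 0, ?_, ?_⟩
    · simp at h ⊢
      omega
    · simp
  | succ r ih =>
    intro n h1 h2
    have hp : ∃ p, p < k ∧ p + 1 ≤ n ∧ r ≤ n - (p + 1) ∧ n - (p + 1) ≤ k * r := by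
      rw [Nat.mul_succ] at h2
      have h3 : r ≤ k * r := Nat.le_mul_of_pos_left r hk
      by_cases h : n - r ≤ k
      · exact ⟨n - r - 1, by omega, by omega, by omega, by omega⟩
      · exact ⟨k - 1, by omega, by omega, by omega, by omega⟩
    obtain ⟨p, hpk, hpn, ha, hb⟩ := hp
    obtain ⟨f, hf1, hf2⟩ := ih _ ha hb
    refine ⟨fun j => f j + if j = ⟨p, hpk⟩ then 1 else 0, ?_, ?_⟩
    · simp only [mul_add, Finset.sum_add_distrib, hf1]
      simp
      omega
    · simp [Finset.sum_add_distrib, hf2]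

/-- For `k ≥ 1` and `n ≥ 1`, the polynomial `M_{(n)}(k,λ)` contains all powers of `λ`
from `λ^n` down to `λ^{⌈n/k⌉}`: the coefficient `c_r(n,k)` is strictly positive for
every `r` with `⌈n/k⌉ ≤ r ≤ n`.  (Here `⌈n/k⌉ = ⌊(n+k−1)/k⌋`.) -/
theorem facMomCoeff_pos (k n r : ℕ) (hk : 1 ≤ k) (hn : 1 ≤ n)
    (h₁ : (n + k - 1) / k ≤ r) (h₂ : r ≤ n) :
    0 < facMomCoeff n k r := by
  have hn' : n ≤ k * r := by
    have h3 := (Nat.div_le_iff_le_mul_add_pred (by omega : 0 < k)).1 h₁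
    omega
  obtain ⟨f, hf1, hf2⟩ := exists_tuple k hk r n h₂ hn'
  have hle : ∀ j, f j < n + 1 := fun j => by
    have := Finset.single_le_sum (f := f) (fun i _ => Nat.zero_le _) (Finset.mem_univ j)
    omega
  unfold facMomCoeff
  refine mul_pos (by positivity) (Finset.sum_pos (fun g _ => Finset.prod_pos fun j _ => ?_) ?_)
  · have : 0 < (k + 1).choose (j.1 + 2) := Nat.choose_pos (by omega)
    positivity
  · refine ⟨fun j => ⟨f j, hle j⟩, ?_⟩
    simp [coeffTuples, hf1, hf2]
end
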